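/- Let V_3, V_4, V_5, … be a sequence where each V_n is a finite-dimensional complex representation of SL_n(ℤ). If dim V_n ≤ n^k for some fixed k and all n, then V_n is algebraic for all sufficiently large n. -/

import Mathlib

open Matrix

/-- A representation of `SL_n(ℂ)` is algebraic (rational) if each matrix entry of `ρ(g)`
is a polynomial function of the matrix entries of `g`. -/
def IsAlgebraicSL {n N : ℕ}
    (ρ : Matrix.SpecialLinearGroup (Fin n) ℂ →* GL (Fin N) ℂ) : Prop :=
  ∀ i j : Fin N, ∃ P : MvPolynomial (Fin n × Fin n) ℂ,
    ∀ g : Matrix.SpecialLinearGroup (Fin n) ℂ,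
      (ρ g : Matrix (Fin N) (Fin N) ℂ) i j =
        MvPolynomial.eval (fun q => (g : Matrix (Fin n) (Fin n) ℂ) q.1 q.2) P

/-- A representation `ρ` of `SL_n(ℤ)` has depth dividing `ℓ` if its restriction to the
principal congruence subgroup `Γ_n(ℓ)` agrees with (the restriction of) an algebraic
representation of `SL_n(ℂ)`. -/
def DepthDvd {n N : ℕ} (ρ : Matrix.SpecialLinearGroup (Fin n) ℤ →* GL (Fin N) ℂ)
    (ℓ : ℕ) : Prop :=
  ∃ ρ' : Matrix.SpecialLinearGroup (Fin n) ℂ →* GL (Fin N) ℂ, IsAlgebraicSL ρ' ∧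
    ∀ g ∈ (Matrix.SpecialLinearGroup.map (n := Fin n) (Int.castRingHom (ZMod ℓ))).ker,
      ρ g = ρ' (Matrix.SpecialLinearGroup.map (Int.castRingHom ℂ) g)

/-!
Fix two indices `p ≠ q` of `SL_n(ℤ)`. The elements `1 + E_pj` and `1 + E_jq`, for the `n - 2`
remaining indices `j`, generate a Heisenberg group whose centre is generated by `1 + E_pq`. On an
eigenspace of `1 + E_pq` for an eigenvalue `l ≠ 1` each pair at least doubles the dimension: if `v`
is an eigenvector of `1 + E_pj` for `c`, then `1 + E_jq` moves it to one for a multiple of `c` by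
`l`. Hence a representation `ρ` of dimension less than `2 ^ (n - 2)` is unipotent on elementary
matrices.

The binomial series then gives one-parameter groups `x_ij(t) = ρ(1 + E_ij) ^ t` for `t ∈ ℂ`. They
are polynomial in `t` and satisfy the Steinberg relations for natural exponents, hence for all. The
Steinberg symbol `{s, z}` is trivial for every root of unity `z`; there are enough of these to make
it trivial identically, so that the torus elements built from the `x_ij` are multiplicative.

Let `Γ` be the group generated by the pairs `(1 + t E_ij, x_ij(t))` for `i`, `j` in a set of
indices. By induction on this set, the second component of an element of `Γ` is a polynomial in the
entries of the first one. When an index `o` is added, a big cell decomposition shows this on a dense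
subset of `Γ`, up to a power of the `(o, o)` entry in the denominator. Hence the ideal of
denominators contains a power of this entry and, as it is stable under translation, of each entry in
row `o`. This row is unimodular, so `1` is a denominator. In particular `Γ` for the set of all
indices is the graph of a polynomial homomorphism on `SL_n(ℂ)`, which extends `ρ`.
-/

open scoped Pointwise

namespace SLnRep

section Transvections

variable {ι R : Type*} [DecidableEq ι] [Fintype ι] [CommRing R]

/-- The transvection `1 + t E_ij` of `SL ι R`, made a total function of `i` and `j` by the junk
value `1` at `i = j`. -/
def elem (i j : ι) (t : R) : Matrix.SpecialLinearGroup ι R :=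
  if h : i ≠ j then Matrix.SpecialLinearGroup.transvection h t else 1

lemma coe_elem {i j : ι} (h : i ≠ j) (t : R) :
    (elem i j t : Matrix ι ι R) = 1 + single i j t := by
  rw [elem, dif_pos h, Matrix.SpecialLinearGroup.transvection_coe]

lemma elem_add {i j : ι} (h : i ≠ j) (s t : R) :
    elem i j (s + t) = elem i j s * elem i j t := by
  simp only [elem, dif_pos h, Matrix.SpecialLinearGroup.transvection_add]

lemma elem_commute {i j k l : ι} (hij : i ≠ j) (hkl : k ≠ l) (hjk : j ≠ k) (hil : i ≠ l)
    (s t : R) : Commute (elem i j s) (elem k l t) := by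
  apply Subtype.ext
  simp only [Matrix.SpecialLinearGroup.coe_mul, coe_elem hij, coe_elem hkl, mul_add, mul_one,
    add_mul, one_mul, single_mul_single_of_ne _ _ _ _ hjk, add_zero,
    single_mul_single_of_ne _ _ _ _ hil.symm]
  abel

lemma elem_mul_elem {i j k : ι} (hij : i ≠ j) (hjk : j ≠ k) (hik : i ≠ k) (s t : R) :
    elem i j s * elem j k t = elem i k (s * t) * elem j k t * elem i j s := by
  apply Subtype.ext
  simp only [Matrix.SpecialLinearGroup.coe_mul, coe_elem hij, coe_elem hjk, coe_elem hik, mul_add,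
    mul_one, add_mul, one_mul, single_mul_single_same, add_zero,
    single_mul_single_of_ne _ _ _ _ hjk.symm, single_mul_single_of_ne _ _ _ _ hik.symm]
  abel

lemma vecMul_elem {i j : ι} (h : i ≠ j) (v : ι → R) (t : R) :
    v ᵥ* (elem i j t : Matrix ι ι R) = v + Pi.single j (v i * t) := by
  ext q
  rw [coe_elem h, vecMul_add, vecMul_one, Pi.add_apply, Pi.add_apply]
  congr 1
  simp [vecMul, dotProduct, single_apply, Pi.single_apply, ite_and, eq_comm]

lemma elem_map {S : Type*} [CommRing S] (f : R →+* S) (i j : ι) (t : R) :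
    Matrix.SpecialLinearGroup.map f (elem i j t) = elem i j (f t) := by
  by_cases h : i = j
  · simp [elem, h]
  · apply Subtype.ext
    ext p q
    simp [coe_elem h, one_apply, single_apply, apply_ite f]

end Transvections

section Generation

variable {ι R G : Type*}

/-- The subgroup generated by those members `x i j t` of a family indexed by matrix positions
whose position `(i, j)` is off the diagonal and lies in `A ×ˢ B`. -/
def positionSubgroup [Group G] (x : ι → ι → R → G) (A B : Finset ι) : Subgroup G :=
  Subgroup.closure {g | ∃ i ∈ A, ∃ j ∈ B, i ≠ j ∧ ∃ t, g = x i j t}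

lemma mem_positionSubgroup [Group G] (x : ι → ι → R → G) {A B : Finset ι} {i j : ι}
    (hi : i ∈ A) (hj : j ∈ B) (hij : i ≠ j) (t : R) : x i j t ∈ positionSubgroup x A B :=
  Subgroup.subset_closure ⟨i, hi, j, hj, hij, t, rfl⟩

lemma positionSubgroup_le [Group G] {x : ι → ι → R → G} {A B : Finset ι} {H : Subgroup G} :
    positionSubgroup x A B ≤ H ↔ ∀ i ∈ A, ∀ j ∈ B, i ≠ j → ∀ t, x i j t ∈ H := by
  rw [positionSubgroup, Subgroup.closure_le]
  exact ⟨fun h i hi j hj hij t => h ⟨i, hi, j, hj, hij, t, rfl⟩,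
    fun h _ ⟨i, hi, j, hj, hij, t, hg⟩ => hg ▸ h i hi j hj hij t⟩

lemma positionSubgroup_mono [Group G] {x : ι → ι → R → G} {A A' B B' : Finset ι}
    (hA : A ⊆ A') (hB : B ⊆ B') : positionSubgroup x A B ≤ positionSubgroup x A' B' :=
  positionSubgroup_le.2 fun _ hi _ hj hij t => mem_positionSubgroup x (hA hi) (hB hj) hij t

lemma positionSubgroup_eq_bot [Group G] {x : ι → ι → R → G} {A B : Finset ι}
    (h : ∀ i ∈ A, ∀ j ∈ B, i = j) : positionSubgroup x A B = ⊥ :=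
  eq_bot_iff.2 (positionSubgroup_le.2 fun i hi j hj hij => absurd (h i hi j hj) hij)

variable [DecidableEq ι] [Fintype ι]

lemma single_vecMul_eq [CommRing R] {S : Finset ι} {p : ι} (hp : p ∉ S)
    {g : Matrix.SpecialLinearGroup ι R} (hg : g ∈ positionSubgroup elem S Finset.univ) :
    (Pi.single p 1 : ι → R) ᵥ* (g : Matrix ι ι R) = Pi.single p 1 := by
  induction hg using Subgroup.closure_induction with
  | mem g hg =>
    obtain ⟨i, hi, j, _, hij, t, rfl⟩ := hg
    rw [vecMul_elem hij, Pi.single_eq_of_ne (ne_of_mem_of_not_mem hi hp), zero_mul,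
      Pi.single_zero, add_zero]
  | one => rw [Matrix.SpecialLinearGroup.coe_one, vecMul_one]
  | mul a b _ _ ha hb => rw [Matrix.SpecialLinearGroup.coe_mul, ← vecMul_vecMul, ha, hb]
  | inv a _ ha =>
    nth_rw 1 [← ha]
    rw [vecMul_vecMul, ← Matrix.SpecialLinearGroup.coe_mul, mul_inv_cancel,
      Matrix.SpecialLinearGroup.coe_one, vecMul_one]

/-- Two rows are equivalent if column operations that add multiples of columns in `S` to other
columns carry one to the other. -/
def ColumnEquiv [CommRing R] (S : Finset ι) (v w : ι → R) : Prop :=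
  ∃ g ∈ positionSubgroup (elem (R := R)) S Finset.univ, v ᵥ* (g : Matrix ι ι R) = w

lemma ColumnEquiv.trans [CommRing R] {S : Finset ι} {u v w : ι → R} (h : ColumnEquiv S u v)
    (h' : ColumnEquiv S v w) : ColumnEquiv S u w := by
  obtain ⟨g, hg, rfl⟩ := h
  obtain ⟨g', hg', rfl⟩ := h'
  exact ⟨g * g', mul_mem hg hg', by rw [Matrix.SpecialLinearGroup.coe_mul, vecMul_vecMul]⟩

lemma columnEquiv_add_single [CommRing R] {S : Finset ι} {i j : ι} (hi : i ∈ S) (hij : i ≠ j)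
    (v : ι → R) (t : R) : ColumnEquiv S v (v + Pi.single j (v i * t)) :=
  ⟨elem i j t, mem_positionSubgroup elem hi (Finset.mem_univ j) hij t, vecMul_elem hij v t⟩

lemma exists_columnEquiv_isUnit [EuclideanDomain R] {S : Finset ι} {v : ι → R}
    (hv : ∀ a, (∀ p ∈ S, a ∣ v p) → IsUnit a) :
    ∃ w, ColumnEquiv S v w ∧ ∃ q ∈ S, IsUnit (w q) := by
  obtain ⟨q, hq, hvq⟩ : ∃ q ∈ S, v q ≠ 0 := by
    by_contra! h
    exact not_isUnit_zero (hv 0 fun p hp => (h p hp).symm ▸ dvd_rfl)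
  generalize hb : v q = b at hvq
  induction b using (EuclideanDomain.r_wellFounded (R := R)).induction generalizing v q with
  | _ b ih =>
    by_cases hdvd : ∀ p ∈ S, b ∣ v p
    · exact ⟨v, ⟨1, one_mem _, by simp⟩, q, hq, hb ▸ hv b hdvd⟩
    push Not at hdvd
    obtain ⟨p, hp, hbp⟩ := hdvd
    have hqp : q ≠ p := by
      rintro rfl
      exact hbp hb.symm.dvd
    set v' := v + Pi.single p (v q * -(v p / b)) with hv'
    have hv'_ne : ∀ k, k ≠ p → v' k = v k := fun k hk => by simp [hv', hk]
    have hv'p : v' p = v p + b * -(v p / b) := by simp [hv', hb]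
    have hmod : v' p = v p % b := by
      rw [hv'p, EuclideanDomain.mod_eq_sub_mul_div]; ring
    have hunim : ∀ a, (∀ k ∈ S, a ∣ v' k) → IsUnit a := fun a ha => hv a fun k hk => by
      have haq : a ∣ b := hb ▸ hv'_ne q hqp ▸ ha q hq
      by_cases hkp : k = p
      · subst hkp
        exact (dvd_add_left (haq.mul_right _)).1 (hv'p ▸ ha k hk)
      · exact hv'_ne k hkp ▸ ha k hk
    have hne : v' p ≠ 0 := fun h => hbp ((EuclideanDomain.mod_eq_zero).1 (hmod ▸ h))
    obtain ⟨w, hw, hwq⟩ := ih (v' p) (hmod ▸ EuclideanDomain.mod_lt _ hvq) hunim p hp rfl hne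
    exact ⟨w, (columnEquiv_add_single hq hqp v _).trans hw, hwq⟩

lemma exists_columnEquiv_eq_one_of_ne [CommRing R] {S : Finset ι} {v : ι → R} {q p : ι}
    (hq : q ∈ S) (hqp : q ≠ p) (hu : IsUnit (v q)) : ∃ w, ColumnEquiv S v w ∧ w p = 1 := by
  obtain ⟨u, hu⟩ := hu
  refine ⟨_, columnEquiv_add_single hq hqp v (↑u⁻¹ * (1 - v p)), ?_⟩
  rw [Pi.add_apply, Pi.single_eq_same, ← hu, Units.mul_inv_cancel_left, add_sub_cancel]

lemma exists_columnEquiv_eq_one [CommRing R] {S : Finset ι} {v : ι → R} {q o k : ι}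
    (ho : o ∈ S) (hk : k ∈ S) (hok : o ≠ k) (hq : q ∈ S) (hu : IsUnit (v q)) :
    ∃ w, ColumnEquiv S v w ∧ w o = 1 := by
  by_cases hqo : q = o
  · subst hqo
    obtain ⟨w, hvw, hw⟩ := exists_columnEquiv_eq_one_of_ne hq hok hu
    obtain ⟨w', hww', hw'⟩ := exists_columnEquiv_eq_one_of_ne hk hok.symm (hw ▸ isUnit_one)
    exact ⟨w', hvw.trans hww', hw'⟩
  · exact exists_columnEquiv_eq_one_of_ne hq hqo hu

lemma columnEquiv_single [CommRing R] {S : Finset ι} {v : ι → R} {o : ι} (ho : o ∈ S)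
    (hv : v o = 1) : ColumnEquiv S v (Pi.single o 1) := by
  suffices h : ∀ A : Finset ι, ∃ w, ColumnEquiv S v w ∧ w o = 1 ∧ ∀ j ∈ A, j ≠ o → w j = 0 by
    obtain ⟨w, hw, hwo, hw0⟩ := h Finset.univ
    convert hw
    ext j
    by_cases hj : j = o
    · rw [hj, hwo, Pi.single_eq_same]
    · rw [Pi.single_eq_of_ne hj, hw0 j (Finset.mem_univ j) hj]
  intro A
  induction A using Finset.induction_on with
  | empty => exact ⟨v, ⟨1, one_mem _, by simp⟩, hv, by simp⟩
  | insert k A _ ih =>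
    obtain ⟨w, hw, hwo, hw0⟩ := ih
    by_cases hko : k = o
    · exact ⟨w, hw, hwo, fun j hj hjo =>
        hw0 j (Finset.mem_of_mem_insert_of_ne hj (hko ▸ hjo)) hjo⟩
    refine ⟨_, hw.trans (columnEquiv_add_single ho (Ne.symm hko) w (-w k)), ?_, ?_⟩
    · simp [hwo, Ne.symm hko]
    · intro j hj hjo
      rcases eq_or_ne j k with rfl | hjk
      · simp [hwo]
      · simp [hjk, hw0 j (Finset.mem_of_mem_insert_of_ne hj hjk) hjo]

lemma isUnit_of_forall_dvd_row [CommRing R] {S : Finset ι} {o : ι} (ho : o ∈ S)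
    {g : Matrix.SpecialLinearGroup ι R} (hg : ∀ p ∉ S, (g : Matrix ι ι R) p = Pi.single p 1) (a : R)
    (ha : ∀ p ∈ S, a ∣ (g : Matrix ι ι R) o p) : IsUnit a := by
  have hinv : ∀ p ∉ S, (g⁻¹ : Matrix.SpecialLinearGroup ι R) p o = 0 := fun p hp => by
    have hrow : ((g : Matrix ι ι R) * (g⁻¹ : Matrix.SpecialLinearGroup ι R)) p o = 0 := by
      rw [← Matrix.SpecialLinearGroup.coe_mul, mul_inv_cancel, Matrix.SpecialLinearGroup.coe_one,
        one_apply_ne (by rintro rfl; exact hp ho)]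
    simpa [mul_apply, hg p hp, Pi.single_apply] using hrow
  refine isUnit_of_dvd_one ?_
  have hdiag : ((g : Matrix ι ι R) * (g⁻¹ : Matrix.SpecialLinearGroup ι R)) o o = 1 := by
    rw [← Matrix.SpecialLinearGroup.coe_mul, mul_inv_cancel, Matrix.SpecialLinearGroup.coe_one,
      one_apply_eq]
  rw [← hdiag, mul_apply]
  refine Finset.dvd_sum fun p _ => ?_
  by_cases hp : p ∈ S
  · exact (ha p hp).mul_right _
  · rw [hinv p hp, mul_zero]
    exact dvd_zero a

lemma diag_eq_one_of_rows [CommRing R] {o : ι} {g : Matrix.SpecialLinearGroup ι R}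
    (hg : ∀ p, p ≠ o → (g : Matrix ι ι R) p = Pi.single p 1) : (g : Matrix ι ι R) o o = 1 := by
  have hupd : (g : Matrix ι ι R) = (1 : Matrix ι ι R).updateRow o ((g : Matrix ι ι R) o) := by
    ext p q
    rcases eq_or_ne p o with rfl | hp
    · simp
    · simp [hg p hp, hp, one_apply, Pi.single_apply, eq_comm]
  have hdet := g.2
  rw [hupd, ← cramer_transpose_apply, transpose_one, cramer_one] at hdet
  exact hdet

lemma mem_positionSubgroup_of_rows [EuclideanDomain R] (J : Finset ι)
    (g : Matrix.SpecialLinearGroup ι R) (hg : ∀ p ∉ J, (g : Matrix ι ι R) p = Pi.single p 1) :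
    g ∈ positionSubgroup elem Finset.univ Finset.univ := by
  induction J using Finset.induction_on generalizing g with
  | empty =>
    have hone : g = 1 := Subtype.ext <| by
      ext p q
      simp [hg p (Finset.notMem_empty p), one_apply, Pi.single_apply, eq_comm]
    exact hone ▸ one_mem _
  | insert o J ho ih =>
    have hoS := Finset.mem_insert_self o J
    obtain ⟨w, hw, hwo⟩ : ∃ w, ColumnEquiv (insert o J) ((g : Matrix ι ι R) o) w ∧ w o = 1 := by
      rcases J.eq_empty_or_nonempty with rfl | ⟨k, hk⟩
      · exact ⟨(g : Matrix ι ι R) o, ⟨1, one_mem _, by simp⟩,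
          diag_eq_one_of_rows fun p hp => hg p (by simpa using hp)⟩
      obtain ⟨w, hw, q, hq, hu⟩ :=
        exists_columnEquiv_isUnit (isUnit_of_forall_dvd_row hoS hg)
      obtain ⟨w', hw', hwo⟩ := exists_columnEquiv_eq_one hoS (Finset.mem_insert_of_mem hk)
        (by rintro rfl; exact ho hk) hq hu
      exact ⟨w', hw.trans hw', hwo⟩
    obtain ⟨c, hc, hrow⟩ := hw.trans (columnEquiv_single hoS hwo)
    have hgc : g * c ∈ positionSubgroup elem Finset.univ Finset.univ := by
      refine ih _ fun p hp => ?_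
      change (g : Matrix ι ι R) p ᵥ* (c : Matrix ι ι R) = _
      rcases eq_or_ne p o with rfl | hpo
      · exact hrow
      · have hpS : p ∉ insert o J := by simp [hpo, hp]
        rw [hg p hpS, single_vecMul_eq hpS hc]
    exact (Subgroup.mul_mem_cancel_right _
      (positionSubgroup_mono (Finset.subset_univ _) subset_rfl hc)).1 hgc

theorem positionSubgroup_elem_eq_top [EuclideanDomain R] :
    positionSubgroup (elem : ι → ι → R → Matrix.SpecialLinearGroup ι R)
      Finset.univ Finset.univ = ⊤ :=
  eq_top_iff.2 fun g _ => mem_positionSubgroup_of_rows Finset.univ g (by simp)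

end Generation

section Steinberg

open scoped commutatorElement

variable {ι K G : Type*} [Field K] [Group G]

/-- The Steinberg relations for a family of one-parameter subgroups `x i j` indexed by the
off-diagonal matrix positions; the values `x i i` are irrelevant. -/
structure IsSteinberg (x : ι → ι → K → G) : Prop where
  add : ∀ {i j}, i ≠ j → ∀ s t, x i j (s + t) = x i j s * x i j t
  commute : ∀ {i j k l}, i ≠ j → k ≠ l → j ≠ k → i ≠ l → ∀ s t,
    Commute (x i j s) (x k l t)
  mul : ∀ {i j k}, i ≠ j → j ≠ k → i ≠ k → ∀ s t,
    x i j s * x j k t = x i k (s * t) * x j k t * x i j s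

/-- Steinberg's element `w_ij(s)`, the monomial matrix `s E_ij - s⁻¹ E_ji + ∑ E_kk` in the case
of transvections. -/
def weyl (x : ι → ι → K → G) (i j : ι) (s : K) : G :=
  x i j s * x j i (-s⁻¹) * x i j s

/-- Steinberg's element `h_ij(s)`, the diagonal matrix with entries `s` at `i` and `s⁻¹` at `j`
in the case of transvections. -/
def torus (x : ι → ι → K → G) (i j : ι) (s : K) : G :=
  weyl x i j s * weyl x i j (-1)

/-- The nonzero entry of the monomial matrix `w_ij(s)` in column `p`. -/
def weylScale [DecidableEq ι] (i j : ι) (s : K) (p : ι) : K :=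
  if p = i then -s⁻¹ else if p = j then s else 1

/-- The entry of the diagonal matrix `h_ij(s)` at `p`. -/
def torusScale [DecidableEq ι] (i j : ι) (s : K) (p : ι) : K :=
  if p = i then s else if p = j then s⁻¹ else 1

lemma torusScale_ne_zero [DecidableEq ι] (i j : ι) {s : K} (hs : s ≠ 0) (p : ι) :
    torusScale i j s p ≠ 0 := by
  unfold torusScale
  split_ifs <;> simp [hs]

lemma weylScale_swap_mul [DecidableEq ι] {i j : ι} (hij : i ≠ j) (s : K) (p : ι) :
    weylScale i j s (Equiv.swap i j p) * weylScale i j (-1) p = torusScale i j s p := by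
  rcases eq_or_ne p i with rfl | hpi
  · simp [weylScale, torusScale, hij.symm]
  rcases eq_or_ne p j with rfl | hpj
  · simp [weylScale, torusScale, hpi]
  · simp [weylScale, torusScale, Equiv.swap_apply_of_ne_of_ne, hpi, hpj]

lemma map_weyl {G' : Type*} [Group G'] (f : G →* G') (x : ι → ι → K → G) (i j : ι) (s : K) :
    weyl (fun i j t => f (x i j t)) i j s = f (weyl x i j s) := by
  simp only [weyl, map_mul]

lemma map_torus {G' : Type*} [Group G'] (f : G →* G') (x : ι → ι → K → G) (i j : ι) (s : K) :
    torus (fun i j t => f (x i j t)) i j s = f (torus x i j s) := by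
  simp only [torus, map_weyl, map_mul]

/-- The elements `h_ij(s)` depend multiplicatively on `s`. For a Steinberg family this is what
distinguishes `SL` from the Steinberg group. -/
def IsTorusMultiplicative (x : ι → ι → K → G) : Prop :=
  ∀ ⦃i j⦄, i ≠ j → ∀ ⦃s t : K⦄, s ≠ 0 → t ≠ 0 →
    torus x i j (s * t) = torus x i j s * torus x i j t

lemma exists_ne_ne [Fintype ι] (hι : 2 < Fintype.card ι) (i j : ι) : ∃ q, i ≠ q ∧ j ≠ q := by
  classical
  obtain ⟨q, _, hq⟩ := Finset.exists_mem_notMem_of_card_lt_card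
    ((Finset.card_le_two (a := i) (b := j)).trans_lt (Finset.card_univ (α := ι) ▸ hι))
  exact ⟨q, fun h => hq (by simp [h]), fun h => hq (by simp [h])⟩

lemma commutatorElement_mul_left_of_commute {a b c : G} (h : Commute ⁅b, c⁆ a) :
    ⁅a * b, c⁆ = ⁅b, c⁆ * ⁅a, c⁆ := by
  rw [commutatorElement_mul_left_eq_conj_mul, ← h.eq, mul_inv_cancel_right]

lemma commute_commutatorElement {a b c : G} (hb : Commute a b) (hc : Commute a c) :
    Commute a ⁅b, c⁆ := by
  rw [commutatorElement_def]
  exact ((hb.mul_right hc).mul_right hb.inv_right).mul_right hc.inv_right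

lemma isSteinberg_elem [DecidableEq ι] [Fintype ι] :
    IsSteinberg (elem : ι → ι → K → Matrix.SpecialLinearGroup ι K) where
  add := elem_add
  commute := elem_commute
  mul := elem_mul_elem

namespace IsSteinberg

variable {x : ι → ι → K → G} (H : IsSteinberg x)
include H

lemma map {G' : Type*} [Group G'] (f : G →* G') : IsSteinberg fun i j t => f (x i j t) where
  add h s t := by rw [H.add h, map_mul]
  commute h₁ h₂ h₃ h₄ s t := (H.commute h₁ h₂ h₃ h₄ s t).map f
  mul h₁ h₂ h₃ s t := by rw [← map_mul, H.mul h₁ h₂ h₃, map_mul, map_mul]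

lemma zero {i j : ι} (h : i ≠ j) : x i j 0 = 1 := by
  simpa using H.add h 0 0

lemma neg {i j : ι} (h : i ≠ j) (t : K) : x i j (-t) = (x i j t)⁻¹ := by
  rw [eq_inv_iff_mul_eq_one, ← H.add h, neg_add_cancel, H.zero h]

lemma transpose : IsSteinberg fun i j t => x j i (-t) where
  add h s t := by rw [neg_add, H.add h.symm]
  commute h₁ h₂ h₃ h₄ s t := H.commute h₁.symm h₂.symm h₄ h₃ (-s) (-t)
  mul {i j k} h₁ h₂ h₃ s t := by
    have h := H.mul h₂.symm h₁.symm h₃.symm (-t) (-s)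
    rw [neg_mul_neg, mul_comm t s] at h
    rw [mul_assoc, h, H.neg h₃.symm, mul_assoc, inv_mul_cancel_left]

omit H in
lemma weyl_transpose (i j : ι) (s : K) :
    weyl (fun i j t => x j i (-t)) i j s = weyl x j i (-s) := by
  simp only [weyl, inv_neg, neg_neg]

lemma weyl_neg {i j : ι} (hij : i ≠ j) (s : K) : weyl x i j (-s) = (weyl x i j s)⁻¹ := by
  simp only [weyl, inv_neg, H.neg hij, H.neg hij.symm, _root_.mul_inv_rev, inv_inv, mul_assoc]

lemma torus_eq {i j : ι} (hij : i ≠ j) (s : K) :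
    torus x i j s = weyl x i j s * (weyl x i j 1)⁻¹ := by
  rw [torus, H.weyl_neg hij]

lemma torus_one {i j : ι} (hij : i ≠ j) : torus x i j 1 = 1 := by
  rw [H.torus_eq hij, mul_inv_cancel]

lemma semiconjBy_mul {i j q : ι} (hij : i ≠ j) (hjq : j ≠ q) (hiq : i ≠ q) (s t : K) :
    SemiconjBy (x i j s) (x j q t) (x i q (s * t) * x j q t) :=
  H.mul hij hjq hiq s t

lemma eq_commutator {i j k : ι} (hij : i ≠ j) (hjk : j ≠ k) (hik : i ≠ k) (s t : K) :
    x i k (s * t) = ⁅x i j s, x j k t⁆ := by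
  rw [commutatorElement_def, H.mul hij hjk hik, mul_inv_cancel_right, mul_inv_cancel_right]

lemma weyl_conj_left {i j q : ι} (hij : i ≠ j) (hjq : j ≠ q) (hiq : i ≠ q) {s : K} (hs : s ≠ 0)
    (t : K) : SemiconjBy (weyl x i j s) (x i q t) (x j q (-s⁻¹ * t)) := by
  have hfix := H.commute hij hiq hij.symm hiq s t
  have hlast := (H.semiconjBy_mul hij hjq hiq s (-s⁻¹ * t)).mul_right hfix
  have hprod : x i q (s * (-s⁻¹ * t)) * x j q (-s⁻¹ * t) * x i q t = x j q (-s⁻¹ * t) := by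
    rw [neg_mul, mul_neg, mul_inv_cancel_left₀ hs, mul_assoc,
      (H.commute hjq hiq hiq.symm hjq _ _).eq, H.neg hiq, inv_mul_cancel_left]
  rw [hprod] at hlast
  exact (hlast.mul_left (H.semiconjBy_mul hij.symm hiq hjq (-s⁻¹) t)).mul_left hfix

lemma weyl_conj_right {i j q : ι} (hij : i ≠ j) (hjq : j ≠ q) (hiq : i ≠ q) {s : K} (hs : s ≠ 0)
    (t : K) : SemiconjBy (weyl x i j s) (x j q t) (x i q (s * t)) := by
  have hmid := (H.semiconjBy_mul hij.symm hiq hjq (-s⁻¹) (s * t)).mul_right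
    (H.commute hij.symm hjq hij hjq (-s⁻¹) t)
  have hprod : x j q (-s⁻¹ * (s * t)) * x i q (s * t) * x j q t = x i q (s * t) := by
    rw [neg_mul, inv_mul_cancel_left₀ hs, mul_assoc,
      (H.commute hiq hjq hjq.symm hiq _ _).eq, H.neg hjq, inv_mul_cancel_left]
  rw [hprod] at hmid
  have hfix : SemiconjBy (x i j s) (x i q (s * t)) (x i q (s * t)) :=
    H.commute hij hiq hij.symm hiq s (s * t)
  exact (hfix.mul_left hmid).mul_left
    (H.semiconjBy_mul hij hjq hiq s t)

lemma weyl_conj_left' {i j q : ι} (hij : i ≠ j) (hjq : j ≠ q) (hiq : i ≠ q) {s : K} (hs : s ≠ 0)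
    (t : K) : SemiconjBy (weyl x i j s) (x q i t) (x q j (-s * t)) := by
  have h := H.transpose.weyl_conj_right hij.symm hiq hjq (neg_ne_zero.2 hs) (-t)
  rwa [weyl_transpose, neg_neg, neg_neg, mul_neg, neg_neg] at h

lemma weyl_conj_right' {i j q : ι} (hij : i ≠ j) (hjq : j ≠ q) (hiq : i ≠ q) {s : K}
    (hs : s ≠ 0) (t : K) : SemiconjBy (weyl x i j s) (x q j t) (x q i (s⁻¹ * t)) := by
  have h := H.transpose.weyl_conj_left hij.symm hiq hjq (neg_ne_zero.2 hs) (-t)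
  rwa [weyl_transpose, neg_neg, neg_neg, inv_neg, neg_neg, mul_neg, neg_neg] at h

lemma weyl_conj_self [Fintype ι] (hι : 2 < Fintype.card ι) {i j : ι} (hij : i ≠ j) {s : K}
    (hs : s ≠ 0) (t : K) : SemiconjBy (weyl x i j s) (x i j t) (x j i (-s⁻¹ * t * s⁻¹)) := by
  obtain ⟨q, hiq, hjq⟩ := exists_ne_ne hι i j
  have h₁ := H.weyl_conj_left hij hjq hiq hs t
  have h₂ := H.weyl_conj_right' hij hjq hiq hs 1
  rw [mul_one] at h₂
  nth_rw 1 [← mul_one t]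
  rw [H.eq_commutator hiq hjq.symm hij, H.eq_commutator hjq hiq.symm hij.symm]
  exact ((h₁.mul_right h₂).mul_right h₁.inv_right).mul_right h₂.inv_right

lemma weyl_conj_swap [Fintype ι] (hι : 2 < Fintype.card ι) {i j : ι} (hij : i ≠ j) {s : K}
    (hs : s ≠ 0) (t : K) : SemiconjBy (weyl x i j s) (x j i t) (x i j (s * t * -s)) := by
  obtain ⟨q, hiq, hjq⟩ := exists_ne_ne hι i j
  have h₁ := H.weyl_conj_right hij hjq hiq hs t
  have h₂ := H.weyl_conj_left' hij hjq hiq hs 1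
  rw [mul_one] at h₂
  nth_rw 1 [← mul_one t]
  rw [H.eq_commutator hiq hjq.symm hij, H.eq_commutator hjq hiq.symm hij.symm]
  exact ((h₁.mul_right h₂).mul_right h₁.inv_right).mul_right h₂.inv_right

lemma weyl_conj [DecidableEq ι] [Fintype ι] (hι : 2 < Fintype.card ι) {i j p q : ι}
    (hij : i ≠ j) (hpq : p ≠ q) {s : K} (hs : s ≠ 0) (t : K) :
    SemiconjBy (weyl x i j s) (x p q t) (x (Equiv.swap i j p) (Equiv.swap i j q)
      (weylScale i j s p * (weylScale i j s q)⁻¹ * t)) := by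
  rcases eq_or_ne p i with rfl | hpi
  · rcases eq_or_ne q j with rfl | hqj
    · convert H.weyl_conj_self hι hij hs t using 2 <;> simp [weylScale, hij.symm]
      ring
    · convert H.weyl_conj_left hij hqj.symm hpq hs t using 2 <;>
        simp [weylScale, hpq.symm, hqj, Equiv.swap_apply_of_ne_of_ne]
  rcases eq_or_ne p j with rfl | hpj
  · rcases eq_or_ne q i with rfl | hqi
    · convert H.weyl_conj_swap hι hij hs t using 2 <;> simp [weylScale, hij.symm]
      ring
    · convert H.weyl_conj_right hij hpq hqi.symm hs t using 2 <;>
        simp [weylScale, hpq.symm, hqi, hpi, Equiv.swap_apply_of_ne_of_ne]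
  rcases eq_or_ne q i with rfl | hqi
  · convert H.weyl_conj_left' hij hpj.symm hpi.symm hs t using 2 <;>
      simp [weylScale, hpi, hpj, Equiv.swap_apply_of_ne_of_ne]
  rcases eq_or_ne q j with rfl | hqj
  · convert H.weyl_conj_right' hij hpj.symm hpi.symm hs t using 2 <;>
      simp [weylScale, hpi, hpj, hqi, Equiv.swap_apply_of_ne_of_ne]
  · have hfix := H.commute hij hpq hpj.symm hqi.symm s t
    have hw : SemiconjBy (weyl x i j s) (x p q t) (x p q t) :=
      (hfix.mul_left (H.commute hij.symm hpq hpi.symm hqj.symm (-s⁻¹) t)).mul_left hfix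
    convert hw using 2 <;>
      simp [weylScale, hpi, hpj, hqi, hqj, Equiv.swap_apply_of_ne_of_ne]

lemma torus_conj [DecidableEq ι] [Fintype ι] (hι : 2 < Fintype.card ι) {i j p q : ι}
    (hij : i ≠ j) (hpq : p ≠ q) {s : K} (hs : s ≠ 0) (t : K) :
    SemiconjBy (torus x i j s) (x p q t)
      (x p q (torusScale i j s p * (torusScale i j s q)⁻¹ * t)) := by
  have h := (H.weyl_conj hι hij ((Equiv.swap i j).injective.ne hpq) hs _).mul_left
    (H.weyl_conj hι hij hpq (neg_ne_zero.2 one_ne_zero) t)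
  have hscale : torusScale i j s p * (torusScale i j s q)⁻¹ * t =
      weylScale i j s (Equiv.swap i j p) * (weylScale i j s (Equiv.swap i j q))⁻¹ *
        (weylScale i j (-1) p * (weylScale i j (-1) q)⁻¹ * t) := by
    rw [← weylScale_swap_mul hij, ← weylScale_swap_mul hij, mul_inv]
    ring
  rw [Equiv.swap_apply_self, Equiv.swap_apply_self, ← hscale] at h
  exact h

lemma torus_conj_weyl [Fintype ι] (hι : 2 < Fintype.card ι) {i j q : ι} (hij : i ≠ j)
    (hjq : j ≠ q) (hiq : i ≠ q) {s : K} (hs : s ≠ 0) (t : K) :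
    SemiconjBy (torus x i j s) (weyl x i q t) (weyl x i q (s * t)) := by
  classical
  have h₁ := H.torus_conj hι hij hiq hs t
  have h₂ := H.torus_conj hι hij hiq.symm hs (-t⁻¹)
  simp only [torusScale, if_true, if_neg hiq.symm, if_neg hjq.symm, inv_one, mul_one, one_mul]
    at h₁ h₂
  rw [mul_neg, ← mul_inv] at h₂
  exact (h₁.mul_right h₂).mul_right h₁

lemma torus_mul [Fintype ι] (hι : 2 < Fintype.card ι) {i j q : ι} (hij : i ≠ j) (hjq : j ≠ q)
    (hiq : i ≠ q) {s : K} (hs : s ≠ 0) (t : K) :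
    torus x i q (s * t) = ⁅torus x i j s, torus x i q t⁆ * torus x i q t * torus x i q s := by
  have h := (H.torus_conj_weyl hι hij hjq hiq hs t).mul_right
    (H.torus_conj_weyl hι hij hjq hiq hs 1).inv_right
  rw [mul_one, ← H.torus_eq hiq] at h
  rw [commutatorElement_def, h.eq, H.torus_eq hiq (s * t), H.torus_eq hiq s]
  group

lemma commute_commutator_torus [Fintype ι] (hι : 2 < Fintype.card ι) {i j k l p q : ι}
    (hij : i ≠ j) (hkl : k ≠ l) (hpq : p ≠ q) {s t : K} (hs : s ≠ 0) (ht : t ≠ 0) (u : K) :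
    Commute ⁅torus x i j s, torus x k l t⁆ (x p q u) := by
  classical
  obtain ⟨a, ha, hta⟩ : ∃ a ≠ 0, ∀ u, SemiconjBy (torus x i j s) (x p q u) (x p q (a * u)) :=
    ⟨_, mul_ne_zero (torusScale_ne_zero i j hs p) (inv_ne_zero (torusScale_ne_zero i j hs q)),
      H.torus_conj hι hij hpq hs⟩
  obtain ⟨b, hb, htb⟩ : ∃ b ≠ 0, ∀ u, SemiconjBy (torus x k l t) (x p q u) (x p q (b * u)) :=
    ⟨_, mul_ne_zero (torusScale_ne_zero k l ht p) (inv_ne_zero (torusScale_ne_zero k l ht q)),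
      H.torus_conj hι hkl hpq ht⟩
  have h₁ := (hta _).mul_left (htb ((b * a)⁻¹ * u))
  have h₂ := ((htb _).mul_left (hta ((b * a)⁻¹ * u))).inv_symm_left
  rw [mul_left_comm, ← mul_assoc b a, mul_inv_cancel_left₀ (mul_ne_zero hb ha)] at h₁
  rw [← mul_assoc b a, mul_inv_cancel_left₀ (mul_ne_zero hb ha)] at h₂
  have h := h₁.mul_left h₂
  rwa [_root_.mul_inv_rev, ← mul_assoc, ← commutatorElement_def] at h

omit H in
lemma commute_torus {c : G} (hc : ∀ p q, p ≠ q → ∀ u, Commute c (x p q u)) {i j : ι}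
    (hij : i ≠ j) (s : K) : Commute c (torus x i j s) := by
  have hw : ∀ s, Commute c (weyl x i j s) := fun s =>
    ((hc i j hij _).mul_right (hc j i hij.symm _)).mul_right (hc i j hij _)
  exact (hw _).mul_right (hw _)

lemma commutator_torus_mul_left [Fintype ι] (hι : 2 < Fintype.card ι) {i j q : ι} (hij : i ≠ j)
    (hjq : j ≠ q) (hiq : i ≠ q) {s s' t : K} (hs : s ≠ 0) (hs' : s' ≠ 0) (ht : t ≠ 0) :
    ⁅torus x i j (s * s'), torus x i q t⁆ =
      ⁅torus x i j s, torus x i q t⁆ * ⁅torus x i j s', torus x i q t⁆ := by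
  set z := ⁅torus x i q s, torus x i j s'⁆
  have hz : ∀ {k l}, k ≠ l → ∀ r, Commute z (torus x k l r) :=
    commute_torus fun p q hpq => H.commute_commutator_torus hι hiq hij hpq hs hs'
  have hz_comm : ∀ r, Commute ⁅torus x i j r, torus x i q t⁆ z := fun r =>
    (commute_commutatorElement (hz hij r) (hz hiq t)).symm
  have hs_comm : Commute ⁅torus x i j s, torus x i q t⁆ (torus x i j s') :=
    commute_torus (fun p q hpq => H.commute_commutator_torus hι hij hiq hpq hs ht) hij s'
  rw [H.torus_mul hι hiq hjq.symm hij hs,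
    commutatorElement_mul_left_of_commute ((hz_comm s).mul_right hs_comm),
    commutatorElement_mul_left_of_commute (hz_comm s'),
    commutatorElement_eq_one_iff_commute.2 (hz hiq t), mul_one]

lemma commutator_torus_pow_left [Fintype ι] (hι : 2 < Fintype.card ι) {i j q : ι} (hij : i ≠ j)
    (hjq : j ≠ q) (hiq : i ≠ q) {s t : K} (hs : s ≠ 0) (ht : t ≠ 0) (k : ℕ) :
    ⁅torus x i j (s ^ k), torus x i q t⁆ = ⁅torus x i j s, torus x i q t⁆ ^ k := by
  induction k with
  | zero => rw [pow_zero, H.torus_one hij, commutatorElement_one_left, pow_zero]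
  | succ k ih =>
    rw [pow_succ, H.commutator_torus_mul_left hι hij hjq hiq (pow_ne_zero k hs) hs ht, ih,
      pow_succ]

-- The symbol {s, ζ} of a root of unity ζ with ζ ^ k = 1 and s = r ^ k is {r, ζ ^ k} = 1.
lemma commute_torus_of_pow_eq_one [Fintype ι] (hι : 2 < Fintype.card ι) [IsAlgClosed K]
    {i j q : ι} (hij : i ≠ j) (hjq : j ≠ q) (hiq : i ≠ q) {s ζ : K} (hs : s ≠ 0) {k : ℕ}
    (hk : k ≠ 0) (hζ : ζ ^ k = 1) : Commute (torus x i j s) (torus x i q ζ) := by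
  have hζ0 : ζ ≠ 0 := fun h => by simp [h, hk] at hζ
  obtain ⟨r, rfl⟩ := IsAlgClosed.exists_pow_nat_eq s (Nat.pos_of_ne_zero hk)
  have hr : r ≠ 0 := fun h => hs (by simp [h, hk])
  rw [← commutatorElement_eq_one_iff_commute, H.commutator_torus_pow_left hι hij hjq hiq hr hζ0,
    ← commutatorElement_inv, inv_pow, ← H.commutator_torus_pow_left hι hiq hjq.symm hij hζ0 hr,
    hζ, H.torus_one hiq, commutatorElement_one_left, inv_one]

lemma torus_mul_of_commute [Fintype ι] (hι : 2 < Fintype.card ι) {i j q : ι} (hij : i ≠ j)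
    (hjq : j ≠ q) (hiq : i ≠ q) {s : K} (hs : s ≠ 0) (t : K)
    (hc : Commute (torus x i j s) (torus x i q t)) :
    torus x i q (s * t) = torus x i q t * torus x i q s := by
  rw [H.torus_mul hι hij hjq hiq hs, commutatorElement_eq_one_iff_commute.2 hc, one_mul]

lemma weyl_eq_weyl_swap [Fintype ι] (hι : 2 < Fintype.card ι) {i j : ι} (hij : i ≠ j) {s : K}
    (hs : s ≠ 0) : weyl x i j s = weyl x j i (-s⁻¹) := by
  have h₁ := H.weyl_conj_self hι hij hs s
  have h₂ := H.weyl_conj_swap hι hij hs (-s⁻¹)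
  rw [(by field_simp : -s⁻¹ * s * s⁻¹ = -s⁻¹)] at h₁
  rw [(by field_simp : s * -s⁻¹ * -s = s)] at h₂
  have h := ((h₁.mul_right h₂).mul_right h₁).eq
  rw [weyl, weyl, inv_neg, inv_inv, neg_neg]
  exact mul_right_cancel h

lemma weyl_mul_weyl_neg (hx : IsTorusMultiplicative x) {i j : ι} (hij : i ≠ j) {s t : K}
    (hs : s ≠ 0) (ht : t ≠ 0) : weyl x i j (s * t) * weyl x i j (-t) = torus x i j s := by
  have h := hx hij hs ht
  rw [H.torus_eq hij (s * t), H.torus_eq hij t, ← mul_assoc] at h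
  rw [mul_right_cancel h, H.weyl_neg hij, mul_inv_cancel_right]

lemma eq_mul_weyl_mul {i j : ι} (hij : i ≠ j) (t : K) :
    x j i t = x i j t⁻¹ * weyl x i j (-t⁻¹) * x i j t⁻¹ := by
  rw [weyl, H.neg hij, inv_neg, inv_inv, neg_neg]
  group

lemma mul_swap [Fintype ι] (hι : 2 < Fintype.card ι) (hx : IsTorusMultiplicative x) {i j : ι}
    (hij : i ≠ j) {s t : K} (hst : 1 + s * t ≠ 0) :
    x i j s * x j i t =
      x j i (t / (1 + s * t)) * torus x i j (1 + s * t) * x i j (s / (1 + s * t)) := by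
  rcases eq_or_ne t 0 with rfl | ht
  · simp [H.zero hij.symm, H.torus_one hij]
  generalize hb : 1 + s * t = b at hst ⊢
  have h_upper : x i j (b * t⁻¹) = x j i (t / b) * weyl x i j (b * t⁻¹) * x j i (t / b) := by
    rw [H.weyl_eq_weyl_swap hι hij (mul_ne_zero hst (inv_ne_zero ht)),
      H.eq_mul_weyl_mul hij.symm (b * t⁻¹), mul_inv, inv_inv, div_eq_mul_inv, mul_comm t]
  have h_weyl : x j i (t / b) * weyl x i j (-t⁻¹) =
      weyl x i j (-t⁻¹) * x i j (-(t⁻¹ / b)) := by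
    have h := (H.weyl_conj_self hι hij (neg_ne_zero.2 (inv_ne_zero ht)) (-(t⁻¹ / b))).eq
    rw [(by field_simp : -(-t⁻¹)⁻¹ * -(t⁻¹ / b) * (-t⁻¹)⁻¹ = t / b)] at h
    exact h.symm
  have h_left : x i j s * x i j t⁻¹ = x i j (b * t⁻¹) := by
    rw [← H.add hij, ← hb]
    congr 1
    field_simp
    ring
  have h_right : x i j (-(t⁻¹ / b)) * x i j t⁻¹ = x i j (s / b) := by
    rw [← H.add hij]
    congr 1
    field_simp
    rw [← hb]
    ring
  calc x i j s * x j i t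
      = x i j (b * t⁻¹) * weyl x i j (-t⁻¹) * x i j t⁻¹ := by
        rw [H.eq_mul_weyl_mul hij t, ← mul_assoc, ← mul_assoc, h_left]
    _ = x j i (t / b) * weyl x i j (b * t⁻¹) * (x j i (t / b) * weyl x i j (-t⁻¹)) * x i j t⁻¹ := by
        rw [h_upper]
        group
    _ = x j i (t / b) * (weyl x i j (b * t⁻¹) * weyl x i j (-t⁻¹)) *
          (x i j (-(t⁻¹ / b)) * x i j t⁻¹) := by
        rw [h_weyl]
        group
    _ = x j i (t / b) * torus x i j b * x i j (s / b) := by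
        rw [H.weyl_mul_weyl_neg hx hij hst (inv_ne_zero ht), h_right]

end IsSteinberg

end Steinberg

section FunctionAlgebras

variable {R Y l m n : Type*} [CommRing R]

/-- The matrix-valued function `φ` has all its entries in the algebra `A` of scalar functions. -/
def EntriesIn (A : Subalgebra R (Y → R)) (φ : Y → Matrix l m R) : Prop :=
  ∀ a b, (fun y => φ y a b) ∈ A

/-- Evaluation at a point, as a ring homomorphism on an algebra of functions. -/
def evalAt (A : Subalgebra R (Y → R)) (y : Y) : A →+* R :=
  (Pi.evalRingHom (fun _ => R) y).comp (algebraMap A (Y → R))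

lemma entriesIn_iff {A : Subalgebra R (Y → R)} {φ : Y → Matrix l m R} :
    EntriesIn A φ ↔ ∃ M : Matrix l m A, ∀ y, φ y = M.map (evalAt A y) :=
  ⟨fun h => ⟨fun a b => ⟨_, h a b⟩, fun _ => rfl⟩, fun ⟨M, hM⟩ a b => by
    simp only [hM]
    exact (M a b).2⟩

namespace EntriesIn

variable {A : Subalgebra R (Y → R)}

lemma const (M : Matrix l m R) : EntriesIn A fun _ : Y => M :=
  fun a b => A.algebraMap_mem (M a b)

lemma mono {B : Subalgebra R (Y → R)} (hAB : A ≤ B) {φ : Y → Matrix l m R}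
    (hφ : EntriesIn A φ) : EntriesIn B φ :=
  fun a b => hAB (hφ a b)

lemma mul [Fintype m] {φ : Y → Matrix l m R} {ψ : Y → Matrix m n R} (hφ : EntriesIn A φ)
    (hψ : EntriesIn A ψ) : EntriesIn A fun y => φ y * ψ y := by
  obtain ⟨M, hM⟩ := entriesIn_iff.1 hφ
  obtain ⟨M', hM'⟩ := entriesIn_iff.1 hψ
  exact entriesIn_iff.2 ⟨M * M', fun y => by rw [hM, hM', Matrix.map_mul]⟩

lemma smul {φ : Y → Matrix l m R} (hφ : EntriesIn A φ) {c : Y → R} (hc : c ∈ A) :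
    EntriesIn A fun y => c y • φ y :=
  fun a b => A.mul_mem hc (hφ a b)

lemma adjugate [Fintype m] [DecidableEq m] {φ : Y → Matrix m m R} (hφ : EntriesIn A φ) :
    EntriesIn A fun y => (φ y).adjugate := by
  obtain ⟨M, hM⟩ := entriesIn_iff.1 hφ
  exact entriesIn_iff.2 ⟨M.adjugate, fun y => by
    rw [hM]
    exact ((evalAt A y).map_adjugate M).symm⟩

end EntriesIn

lemma exists_pow_mul_mem_of_mem_adjoin_insert {B : Type*} [CommRing B] [Algebra R B]
    {A : Subalgebra R B} {d e f : B} (hd : d ∈ A) (hde : d * e = 1)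
    (hf : f ∈ Algebra.adjoin R (insert e (A : Set B))) : ∃ k : ℕ, d ^ k * f ∈ A := by
  induction hf using Algebra.adjoin_induction with
  | mem f hf =>
    rcases hf with rfl | hf
    · exact ⟨1, by simp [hde, A.one_mem]⟩
    · exact ⟨0, by simpa using hf⟩
  | algebraMap r => exact ⟨0, by simp⟩
  | add f g _ _ hf hg =>
    obtain ⟨k, hk⟩ := hf
    obtain ⟨k', hk'⟩ := hg
    refine ⟨k + k', ?_⟩
    convert A.add_mem (A.mul_mem (A.pow_mem hd k') hk) (A.mul_mem (A.pow_mem hd k) hk') using 1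
    ring
  | mul f g _ _ hf hg =>
    obtain ⟨k, hk⟩ := hf
    obtain ⟨k', hk'⟩ := hg
    refine ⟨k + k', ?_⟩
    convert A.mul_mem hk hk' using 1
    ring

end FunctionAlgebras

section PolynomialMaps

open Polynomial

variable {R K Y σ : Type*} [CommRing R] [Field K]

/-- The functions on `Y` that are polynomials in the coordinate functions `c`. -/
noncomputable def coordinateAlgebra (c : σ → Y → R) : Subalgebra R (Y → R) :=
  (MvPolynomial.aeval c).range

lemma mem_coordinateAlgebra {c : σ → Y → R} {f : Y → R} :
    f ∈ coordinateAlgebra c ↔ ∃ P, ∀ y, f y = MvPolynomial.eval (fun i => c i y) P := by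
  have h_eval (P : MvPolynomial σ R) (y : Y) :
      MvPolynomial.aeval c P y = MvPolynomial.eval (fun i => c i y) P := by
    simpa [← MvPolynomial.aeval_eq_eval] using
      MvPolynomial.comp_aeval_apply (f := c) (Pi.evalAlgHom R (fun _ => R) y) P
  simp only [coordinateAlgebra, AlgHom.mem_range, funext_iff, h_eval, eq_comm]

lemma coordinateAlgebra_le {c : σ → Y → R} {A : Subalgebra R (Y → R)} (h : ∀ i, c i ∈ A) :
    coordinateAlgebra c ≤ A := by
  rw [coordinateAlgebra, ← Algebra.adjoin_range_eq_range_aeval]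
  exact Algebra.adjoin_le (Set.range_subset_iff.2 h)

lemma coord_mem_coordinateAlgebra (c : σ → Y → R) (i : σ) : c i ∈ coordinateAlgebra c :=
  ⟨MvPolynomial.X i, MvPolynomial.aeval_X c i⟩

lemma comp_mem_of_mem_coordinateAlgebra {X : Type*} {c : σ → X → R} {f : X → R}
    (hf : f ∈ coordinateAlgebra c) {g : Y → X} {A : Subalgebra R (Y → R)}
    (hg : ∀ i, (fun y => c i (g y)) ∈ A) : (fun y => f (g y)) ∈ A := by
  obtain ⟨P, hP⟩ := mem_coordinateAlgebra.1 hf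
  exact coordinateAlgebra_le hg (mem_coordinateAlgebra.2 ⟨P, fun y => hP (g y)⟩)

/-- The polynomial functions of one variable. -/
noncomputable def polynomialMaps (R : Type*) [CommRing R] : Subalgebra R (R → R) :=
  (aeval id).range

lemma mem_polynomialMaps {f : R → R} : f ∈ polynomialMaps R ↔ ∃ p : R[X], ∀ t, f t = p.eval t := by
  simp only [polynomialMaps, AlgHom.mem_range, funext_iff, aeval_fn_apply, coe_aeval_eq_eval,
    id_eq, eq_comm]

lemma id_mem_polynomialMaps : (fun t => t) ∈ polynomialMaps R :=
  mem_polynomialMaps.2 ⟨X, fun _ => eval_X.symm⟩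

lemma comp_mem_of_mem_polynomialMaps {f : R → R} (hf : f ∈ polynomialMaps R) {g : Y → R}
    {A : Subalgebra R (Y → R)} (hg : g ∈ A) : (fun y => f (g y)) ∈ A := by
  obtain ⟨p, hp⟩ := mem_polynomialMaps.1 hf
  have h : (fun y => f (g y)) = aeval g p := by
    ext y
    rw [hp, aeval_fn_apply, coe_aeval_eq_eval]
  rw [h]
  exact Algebra.adjoin_le (Set.singleton_subset_iff.2 hg) (aeval_mem_adjoin_singleton R g)

lemma EntriesIn.comp_polynomialMaps {l m : Type*} {φ : R → Matrix l m R}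
    (hφ : EntriesIn (polynomialMaps R) φ) {A : Subalgebra R (Y → R)} {g : Y → R} (hg : g ∈ A) :
    EntriesIn A fun y => φ (g y) :=
  fun a b => comp_mem_of_mem_polynomialMaps (hφ a b) hg

lemma eq_zero_of_mem_polynomialMaps {f : K → K} (hf : f ∈ polynomialMaps K)
    (h : {t | f t = 0}.Infinite) (t : K) : f t = 0 := by
  obtain ⟨p, hp⟩ := mem_polynomialMaps.1 hf
  rw [hp, p.eq_zero_of_infinite_isRoot (h.mono fun s hs => (hp s).symm.trans hs), eval_zero]

/-- The Laurent polynomials, as functions on the units. -/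
noncomputable def laurentMaps (R : Type*) [CommRing R] : Subalgebra R (Rˣ → R) :=
  Algebra.adjoin R {fun t : Rˣ => (t : R), fun t : Rˣ => ((t⁻¹ : Rˣ) : R)}

lemma exists_eval_eq_of_mem_laurentMaps {f : Rˣ → R} (hf : f ∈ laurentMaps R) :
    ∃ (k : ℕ) (p : R[X]), ∀ t : Rˣ, (t : R) ^ k * f t = p.eval (t : R) := by
  let A : Subalgebra R (Rˣ → R) := (aeval fun t : Rˣ => (t : R)).range
  have h_val : (fun t : Rˣ => (t : R)) ∈ A := ⟨X, aeval_X _⟩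
  have h_le : laurentMaps R ≤
      Algebra.adjoin R (insert (fun t : Rˣ => ((t⁻¹ : Rˣ) : R)) (A : Set (Rˣ → R))) :=
    Algebra.adjoin_mono (by
      rw [Set.pair_comm]
      exact Set.insert_subset_insert (Set.singleton_subset_iff.2 h_val))
  obtain ⟨k, p, hp⟩ := exists_pow_mul_mem_of_mem_adjoin_insert h_val
    (by ext t; simp) (h_le hf)
  refine ⟨k, p, fun t => ?_⟩
  have h := congrFun hp t
  simpa [aeval_fn_apply] using h.symm

lemma eq_zero_of_mem_laurentMaps {f : Kˣ → K} (hf : f ∈ laurentMaps K)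
    (h : {t | f t = 0}.Infinite) (t : Kˣ) : f t = 0 := by
  obtain ⟨k, p, hp⟩ := exists_eval_eq_of_mem_laurentMaps hf
  have h_zero : p = 0 := p.eq_zero_of_infinite_isRoot <|
    (h.image Units.val_injective.injOn).mono <| by
      rintro _ ⟨s, hs, rfl⟩
      exact (hp s).symm.trans (by rw [Set.mem_ofPred.1 hs, mul_zero])
  simpa [h_zero] using hp t

lemma EntriesIn.eq_of_laurentMaps {l m : Type*} {φ ψ : Kˣ → Matrix l m K}
    (hφ : EntriesIn (laurentMaps K) φ) (hψ : EntriesIn (laurentMaps K) ψ)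
    (h : {t | φ t = ψ t}.Infinite) (t : Kˣ) : φ t = ψ t := by
  ext a b
  refine sub_eq_zero.1 (eq_zero_of_mem_laurentMaps (sub_mem (hφ a b) (hψ a b)) (h.mono ?_) t)
  intro s hs
  simp [Set.mem_ofPred.1 hs]

end PolynomialMaps

section PolynomialFamily

variable {ι m : Type*} [Fintype m] [DecidableEq m]

lemma infinite_setOf_pow_eq_one : {ζ : ℂˣ | ∃ k ≠ 0, ζ ^ k = 1}.Infinite := by
  have h_prim (k : ℕ) : IsPrimitiveRoot
      (Units.mk0 _ (Complex.exp_ne_zero (2 * Real.pi * Complex.I / (k + 1 : ℕ)))) (k + 1) :=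
    IsPrimitiveRoot.coe_units_iff.1 (Complex.isPrimitiveRoot_exp (k + 1) k.succ_ne_zero)
  refine Set.infinite_of_injective_forall_mem (fun a b hab => ?_)
    fun k => ⟨k + 1, k.succ_ne_zero, (h_prim k).pow_eq_one⟩
  have h := (h_prim a).eq_orderOf.trans
    ((congrArg orderOf hab).trans (h_prim b).eq_orderOf.symm)
  exact Nat.succ_injective h

/-- A family of matrices whose entries depend polynomially on the parameter. -/
def IsPolynomialFamily {R : Type*} [CommRing R] (x : ι → ι → R → GL m R) : Prop :=
  ∀ ⦃i j⦄, i ≠ j → EntriesIn (polynomialMaps R) fun t => (x i j t : Matrix m m R)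

lemma IsPolynomialFamily.entriesIn_torus {K Y : Type*} [Field K] {x : ι → ι → K → GL m K}
    (hx : IsPolynomialFamily x) {i j : ι} (hij : i ≠ j) {A : Subalgebra K (Y → K)} {s : Y → K}
    (hs : s ∈ A) (hs' : (fun y => (s y)⁻¹) ∈ A) :
    EntriesIn A fun y => ((torus x i j (s y) : GL m K) : Matrix m m K) := by
  have h_mid : (fun y => -(s y)⁻¹) ∈ A := A.neg_mem hs'
  simp only [torus, weyl, Units.val_mul]
  exact ((((hx hij).comp_polynomialMaps hs).mul ((hx hij.symm).comp_polynomialMaps h_mid)).mul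
    ((hx hij).comp_polynomialMaps hs)).mul (EntriesIn.const _)

theorem IsPolynomialFamily.isTorusMultiplicative [Fintype ι] (hι : 2 < Fintype.card ι)
    {x : ι → ι → ℂ → GL m ℂ} (H : IsSteinberg x) (hx : IsPolynomialFamily x) :
    IsTorusMultiplicative x := by
  intro i q hiq s t hs ht
  obtain ⟨j, hij, hqj⟩ := exists_ne_ne hι i q
  have h_laurent : EntriesIn (laurentMaps ℂ) fun u : ℂˣ =>
      ((torus x i q (u : ℂ) : GL m ℂ) : Matrix m m ℂ) :=
    hx.entriesIn_torus hiq (Algebra.subset_adjoin (by simp)) (Algebra.subset_adjoin (by simp))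
  have h_comm (r u : ℂˣ) : Commute (torus x i j (r : ℂ)) (torus x i q (u : ℂ)) := by
    refine Units.ext (EntriesIn.eq_of_laurentMaps ((EntriesIn.const _).mul h_laurent)
      (h_laurent.mul (EntriesIn.const _)) (infinite_setOf_pow_eq_one.mono ?_) u)
    rintro ζ ⟨k, hk, hζ⟩
    exact congrArg Units.val (H.commute_torus_of_pow_eq_one hι hij hqj.symm hiq r.ne_zero hk
      (by rw [← Units.val_pow_eq_pow_val, hζ, Units.val_one])).eq
  rw [mul_comm]
  exact H.torus_mul_of_commute hι hij hqj.symm hiq ht s (h_comm (Units.mk0 t ht) (Units.mk0 s hs))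

end PolynomialFamily

section GraphFamily

variable {ι m : Type*} [Fintype ι] [DecidableEq ι] [Fintype m] [DecidableEq m]

lemma entriesIn_elem {R : Type*} [CommRing R] {i j : ι} (hij : i ≠ j) :
    EntriesIn (polynomialMaps R) fun t => (elem i j t : Matrix ι ι R) := by
  intro a b
  have h (t : R) : (elem i j t : Matrix ι ι R) = 1 + t • single i j 1 := by
    rw [coe_elem hij, smul_single, smul_eq_mul, mul_one]
  simp only [h, Matrix.add_apply]
  exact add_mem (EntriesIn.const 1 a b)
    ((EntriesIn.const (single i j 1)).smul id_mem_polynomialMaps a b)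

/-- The family of pairs `(1 + t E_ij, x i j t)`; it generates the graph of the extension of `x`
to a representation of `SL`, once that extension is known to exist. -/
def graphFamily {R : Type*} [CommRing R] (x : ι → ι → R → GL m R) (i j : ι) (t : R) :
    Matrix.SpecialLinearGroup ι R × GL m R :=
  (elem i j t, x i j t)

lemma IsSteinberg.graphFamily {K : Type*} [Field K] {x : ι → ι → K → GL m K}
    (H : IsSteinberg x) : IsSteinberg (graphFamily x) where
  add h s t := Prod.ext (elem_add h s t) (H.add h s t)
  commute h₁ h₂ h₃ h₄ s t := (elem_commute h₁ h₂ h₃ h₄ s t).prod (H.commute h₁ h₂ h₃ h₄ s t)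
  mul h₁ h₂ h₃ s t := Prod.ext (elem_mul_elem h₁ h₂ h₃ s t) (H.mul h₁ h₂ h₃ s t)

lemma torus_graphFamily {K : Type*} [Field K] (x : ι → ι → K → GL m K) (i j : ι) (s : K) :
    torus (graphFamily x) i j s = (torus elem i j s, torus x i j s) :=
  Prod.ext (map_torus (MonoidHom.fst _ _) (graphFamily x) i j s).symm
    (map_torus (MonoidHom.snd _ _) (graphFamily x) i j s).symm

lemma isTorusMultiplicative_elem (hι : 2 < Fintype.card ι) :
    IsTorusMultiplicative (elem : ι → ι → ℂ → Matrix.SpecialLinearGroup ι ℂ) := by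
  have h := IsPolynomialFamily.isTorusMultiplicative hι
    (isSteinberg_elem.map Matrix.SpecialLinearGroup.toGL)
    (fun _ _ hij => entriesIn_elem hij)
  intro i j hij s t hs ht
  apply Matrix.SpecialLinearGroup.toGL_injective
  rw [map_mul]
  simp only [← map_torus]
  exact h hij hs ht

lemma isTorusMultiplicative_graphFamily (hι : 2 < Fintype.card ι) {x : ι → ι → ℂ → GL m ℂ}
    (H : IsSteinberg x) (hx : IsPolynomialFamily x) : IsTorusMultiplicative (graphFamily x) := by
  intro i j hij s t hs ht
  simp only [torus_graphFamily]
  exact Prod.ext (isTorusMultiplicative_elem hι hij hs ht)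
    (hx.isTorusMultiplicative hι H hij hs ht)

end GraphFamily

section Cell

variable {ι K G : Type*} [Field K] [Group G] {x : ι → ι → K → G}

omit [Field K] in
lemma positionSubgroup_le_comap {G' : Type*} [Group G'] (f : G →* G') (x : ι → ι → K → G)
    (A B : Finset ι) :
    positionSubgroup x A B ≤ (positionSubgroup (fun i j t => f (x i j t)) A B).comap f :=
  positionSubgroup_le.2 fun _ hi _ hj hij t =>
    mem_positionSubgroup (fun i j t => f (x i j t)) hi hj hij t

/-- The group generated by the elements `h_ij(s)`. -/
def torusSubgroup (x : ι → ι → K → G) (i j : ι) : Subgroup G :=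
  Subgroup.closure (torus x i j '' {0}ᶜ)

lemma torus_mem_torusSubgroup (x : ι → ι → K → G) (i j : ι) {s : K} (hs : s ≠ 0) :
    torus x i j s ∈ torusSubgroup x i j :=
  Subgroup.subset_closure (Set.mem_image_of_mem _ hs)

lemma mem_torusSubgroup (hx : IsTorusMultiplicative x) {i j : ι} (hij : i ≠ j) {g : G} :
    g ∈ torusSubgroup x i j ↔ ∃ s ≠ 0, g = torus x i j s := by
  refine ⟨fun hg => ?_, fun ⟨s, hs, hg⟩ => hg ▸ torus_mem_torusSubgroup x i j hs⟩
  let f : Kˣ →* G := .mk' (fun s => torus x i j s) fun s t => hx hij s.ne_zero t.ne_zero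
  have h_le : torusSubgroup x i j ≤ f.range := (Subgroup.closure_le _).2 <| by
    rintro _ ⟨s, hs, rfl⟩
    exact ⟨Units.mk0 s hs, rfl⟩
  obtain ⟨s, rfl⟩ := h_le hg
  exact ⟨s, s.ne_zero, rfl⟩

/-- The standard Levi subgroup attached to the partition `{o} ∪ J`, where `k ∈ J`. -/
def levi (x : ι → ι → K → G) (o k : ι) (J : Finset ι) : Subgroup G :=
  torusSubgroup x o k ⊔ positionSubgroup x J J

/-- The standard parabolic subgroup attached to the partition `{o} ∪ J`, where `k ∈ J`. -/
def parabolic (x : ι → ι → K → G) (o k : ι) (J : Finset ι) : Subgroup G :=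
  levi x o k J ⊔ positionSubgroup x {o} J

/-- The product of the opposite unipotent radical and the parabolic. In `SL` this is the open
set where the `(o, o)` entry does not vanish. -/
def bigCell (x : ι → ι → K → G) (o k : ι) (J : Finset ι) : Set G :=
  positionSubgroup x J {o} * parabolic x o k J

lemma mul_mem_bigCell {o k : ι} {J : Finset ι} {c p : G} (hc : c ∈ bigCell x o k J)
    (hp : p ∈ parabolic x o k J) : c * p ∈ bigCell x o k J := by
  obtain ⟨f, hf, q, hq, rfl⟩ := hc
  exact ⟨f, hf, q * p, mul_mem hq hp, (mul_assoc f q p).symm⟩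

namespace IsSteinberg

variable (H : IsSteinberg x)

include H

lemma induction_right {A B : Finset ι} {p : G → Prop} (one : p 1)
    (mul : ∀ g, p g → ∀ i ∈ A, ∀ j ∈ B, i ≠ j → ∀ t, p (g * x i j t)) {g : G}
    (hg : g ∈ positionSubgroup x A B) : p g := by
  induction hg using Subgroup.closure_induction_right with
  | one => exact one
  | mul_right g _ _ hy ih =>
    obtain ⟨i, hi, j, hj, hij, t, rfl⟩ := hy
    exact mul g ih i hi j hj hij t
  | mul_inv_cancel g _ _ hy ih =>
    obtain ⟨i, hi, j, hj, hij, t, rfl⟩ := hy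
    rw [← H.neg hij]
    exact mul g ih i hi j hj hij (-t)

lemma positionSubgroup_le_normalizer {A B C D : Finset ι}
    (h : ∀ p ∈ A, ∀ q ∈ B, p ≠ q → ∀ s, ∀ i ∈ C, ∀ j ∈ D, i ≠ j → ∀ t,
      x p q s * x i j t * (x p q s)⁻¹ ∈ positionSubgroup x C D) :
    positionSubgroup x A B ≤ Subgroup.normalizer (positionSubgroup x C D : Set G) := by
  refine Subgroup.le_normalizer_closure_iff.2 fun g hg y hy => ?_
  suffices h_conj : ∀ y ∈ positionSubgroup x C D, g * y * g⁻¹ ∈ positionSubgroup x C D from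
    h_conj y (Subgroup.subset_closure hy)
  refine H.induction_right (p := fun g => ∀ y ∈ positionSubgroup x C D,
    g * y * g⁻¹ ∈ positionSubgroup x C D) (by simp) (fun g ih p hp q hq hpq s y hy => ?_) hg
  have h_gen : positionSubgroup x C D ≤
      (positionSubgroup x C D).comap (MulAut.conj (x p q s)).toMonoidHom :=
    positionSubgroup_le.2 fun i hi j hj hij t => h p hp q hq hpq s i hi j hj hij t
  simpa only [MulEquiv.coe_toMonoidHom, MulAut.conj_apply, _root_.mul_inv_rev, mul_assoc]
    using ih _ (h_gen hy)

lemma positionSubgroup_le_normalizer_left {A B : Finset ι} (hAB : Disjoint A B) :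
    positionSubgroup x A A ≤ Subgroup.normalizer (positionSubgroup x A B : Set G) := by
  refine H.positionSubgroup_le_normalizer fun p hp q _ hpq s i hi j hj hij t => ?_
  have hpj : p ≠ j := fun h => Finset.disjoint_left.1 hAB hp (h ▸ hj)
  rcases eq_or_ne q i with rfl | hqi
  · rw [H.mul hpq hij hpj, mul_inv_cancel_right]
    exact mul_mem (mem_positionSubgroup x hp hj hpj _) (mem_positionSubgroup x hi hj hij t)
  · rw [(H.commute hpq hij hqi hpj s t).eq, mul_inv_cancel_right]
    exact mem_positionSubgroup x hi hj hij t

lemma positionSubgroup_le_normalizer_right {A B : Finset ι} (hAB : Disjoint A B) :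
    positionSubgroup x B B ≤ Subgroup.normalizer (positionSubgroup x A B : Set G) := by
  refine H.positionSubgroup_le_normalizer fun p hp q hq hpq s i hi j hj hij t => ?_
  have hiq : i ≠ q := fun h => Finset.disjoint_left.1 hAB hi (h ▸ hq)
  rcases eq_or_ne j p with rfl | hjp
  · have h : x j q s * x i j t = (x i q (t * s))⁻¹ * x i j t * x j q s := by
      rw [mul_assoc, eq_inv_mul_iff_mul_eq, ← mul_assoc]
      exact (H.mul hij hpq hiq t s).symm
    rw [h, mul_inv_cancel_right]
    exact mul_mem (inv_mem (mem_positionSubgroup x hi hq hiq _))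
      (mem_positionSubgroup x hi hj hij t)
  · rw [(H.commute hpq hij hiq.symm hjp.symm s t).eq, mul_inv_cancel_right]
    exact mem_positionSubgroup x hi hj hij t

lemma exists_eq_mul_of_mem_positionSubgroup {A A' B B' : Finset ι} (hAB : Disjoint A B)
    {i j : ι} (hi : i ∈ A) (hj : j ∈ B)
    (h : ∀ p ∈ A, ∀ q ∈ B, (p = i ∧ q = j) ∨ (p ∈ A' ∧ q ∈ B')) {u : G}
    (hu : u ∈ positionSubgroup x A B) :
    ∃ u' ∈ positionSubgroup x A' B', ∃ s, u = u' * x i j s := by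
  have h_ne {p q : ι} (hp : p ∈ A) (hq : q ∈ B) : p ≠ q := fun hpq =>
    Finset.disjoint_left.1 hAB hp (hpq ▸ hq)
  have hij := h_ne hi hj
  refine H.induction_right (p := fun u => ∃ u' ∈ positionSubgroup x A' B', ∃ s,
    u = u' * x i j s) ⟨1, one_mem _, 0, by rw [H.zero hij, one_mul]⟩ ?_ hu
  rintro _ ⟨u', hu', s, rfl⟩ p hp q hq hpq t
  rcases h p hp q hq with ⟨rfl, rfl⟩ | ⟨hp', hq'⟩
  · exact ⟨u', hu', s + t, by rw [H.add hij, mul_assoc]⟩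
  · refine ⟨u' * x p q t, mul_mem hu' (mem_positionSubgroup x hp' hq' hpq t), s, ?_⟩
    rw [mul_assoc, mul_assoc, (H.commute hij hpq (h_ne hp hj).symm (h_ne hi hq) s t).eq]

lemma conj_mem_parabolic [DecidableEq ι] {o j : ι} (k : ι) {J : Finset ι} (ho : o ∉ J)
    (hj : j ∈ J) {u : G} (hu : u ∈ positionSubgroup x {o} (J.erase j)) (r : K) :
    (x j o r)⁻¹ * u * x j o r ∈ parabolic x o k J := by
  suffices h : positionSubgroup x {o} (J.erase j) ≤
      (parabolic x o k J).comap (MulAut.conj (x j o r)⁻¹).toMonoidHom by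
    simpa only [Subgroup.mem_comap, MulEquiv.coe_toMonoidHom, MulAut.conj_apply, inv_inv]
      using h hu
  refine positionSubgroup_le.2 fun p hp q hq hpq t => ?_
  obtain rfl := Finset.mem_singleton.1 hp
  obtain ⟨hqj, hqJ⟩ := Finset.mem_erase.1 hq
  have hjp : j ≠ p := ne_of_mem_of_not_mem hj ho
  rw [Subgroup.mem_comap, MulEquiv.coe_toMonoidHom, MulAut.conj_apply, ← H.neg hjp,
    H.mul hjp hpq hqj.symm, mul_inv_cancel_right]
  exact mul_mem (Subgroup.mem_sup_left (Subgroup.mem_sup_right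
      (mem_positionSubgroup x hj hqJ hqj.symm _)))
    (Subgroup.mem_sup_right (mem_positionSubgroup x hp hqJ hpq t))

section Torus

variable [Fintype ι] (hι : 2 < Fintype.card ι) (hx : IsTorusMultiplicative x)

include hι in
lemma torus_mem_levi {o k j : ι} {J : Finset ι} (ho : o ∉ J) (hk : k ∈ J) (hj : j ∈ J) {s : K}
    (hs : s ≠ 0) : torus x o j s ∈ levi x o k J := by
  classical
  rcases eq_or_ne k j with rfl | hkj
  · exact Subgroup.mem_sup_left (torus_mem_torusSubgroup x o k hs)
  have hok : o ≠ k := (ne_of_mem_of_not_mem hk ho).symm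
  have hoj : o ≠ j := (ne_of_mem_of_not_mem hj ho).symm
  have h_weyl : weyl x j k 1 ∈ levi x o k J :=
    Subgroup.mem_sup_right (mul_mem (mul_mem (mem_positionSubgroup x hj hk hkj.symm _)
      (mem_positionSubgroup x hk hj hkj _)) (mem_positionSubgroup x hj hk hkj.symm _))
  have h_row (t : K) : SemiconjBy (weyl x j k 1) (x o k t) (x o j t) := by
    simpa [weylScale, hok, hoj, hkj, Equiv.swap_apply_of_ne_of_ne] using
      H.weyl_conj hι hkj.symm hok one_ne_zero t
  have h_col (t : K) : SemiconjBy (weyl x j k 1) (x k o t) (x j o t) := by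
    simpa [weylScale, hok, hoj, hkj, Equiv.swap_apply_of_ne_of_ne] using
      H.weyl_conj hι hkj.symm hok.symm one_ne_zero t
  have h_weyl_conj (t : K) : SemiconjBy (weyl x j k 1) (weyl x o k t) (weyl x o j t) :=
    ((h_row t).mul_right (h_col _)).mul_right (h_row t)
  have h_torus := (h_weyl_conj s).mul_right (h_weyl_conj (-1))
  rw [torus, ← mul_inv_eq_of_eq_mul h_torus.eq]
  exact mul_mem (mul_mem h_weyl (Subgroup.mem_sup_left (torus_mem_torusSubgroup x o k hs)))
    (inv_mem h_weyl)

include hι hx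

lemma torusSubgroup_le_normalizer {o k : ι} (hok : o ≠ k) (A B : Finset ι) :
    torusSubgroup x o k ≤ Subgroup.normalizer (positionSubgroup x A B : Set G) := by
  classical
  refine Subgroup.le_normalizer_closure_iff.2 fun g hg y hy => ?_
  obtain ⟨s, hs, rfl⟩ := (mem_torusSubgroup hx hok).1 hg
  obtain ⟨i, hi, j, hj, hij, t, rfl⟩ := hy
  rw [(H.torus_conj hι hok hij hs t).eq, mul_inv_cancel_right]
  exact mem_positionSubgroup x hi hj hij _

lemma exists_of_mem_levi {o k : ι} (hok : o ≠ k) {J : Finset ι} {g : G}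
    (hg : g ∈ levi x o k J) : ∃ s ≠ 0, ∃ m ∈ positionSubgroup x J J, g = torus x o k s * m := by
  rw [← SetLike.mem_coe, levi, Subgroup.coe_mul_of_left_le_normalizer_right _ _
    (H.torusSubgroup_le_normalizer hι hx hok J J)] at hg
  obtain ⟨t, ht, m, hm, rfl⟩ := hg
  obtain ⟨s, hs, rfl⟩ := (mem_torusSubgroup hx hok).1 ht
  exact ⟨s, hs, m, hm, rfl⟩

lemma levi_le_normalizer_col {o k : ι} {J : Finset ι} (ho : o ∉ J) (hk : k ∈ J) :
    levi x o k J ≤ Subgroup.normalizer (positionSubgroup x J {o} : Set G) :=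
  sup_le (H.torusSubgroup_le_normalizer hι hx (ne_of_mem_of_not_mem hk ho).symm J {o})
    (H.positionSubgroup_le_normalizer_left (Finset.disjoint_singleton_right.2 ho))

lemma exists_of_mem_parabolic {o k : ι} {J : Finset ι} (ho : o ∉ J) (hk : k ∈ J) {g : G}
    (hg : g ∈ parabolic x o k J) :
    ∃ l ∈ levi x o k J, ∃ u ∈ positionSubgroup x {o} J, g = l * u := by
  have h_normalizer : levi x o k J ≤ Subgroup.normalizer (positionSubgroup x {o} J : Set G) :=
    sup_le (H.torusSubgroup_le_normalizer hι hx (ne_of_mem_of_not_mem hk ho).symm {o} J)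
      (H.positionSubgroup_le_normalizer_right (Finset.disjoint_singleton_left.2 ho))
  rw [← SetLike.mem_coe, parabolic,
    Subgroup.coe_mul_of_left_le_normalizer_right _ _ h_normalizer] at hg
  obtain ⟨l, hl, u, hu, rfl⟩ := hg
  exact ⟨l, hl, u, hu, rfl⟩

lemma exists_mul_mem_bigCell {o k j : ι} {J : Finset ι} (ho : o ∉ J) (hk : k ∈ J) (hj : j ∈ J)
    {c : G} (hc : c ∈ bigCell x o k J) :
    ∃ s, ∀ t, 1 + s * t ≠ 0 → c * x j o t ∈ bigCell x o k J := by
  classical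
  obtain ⟨f, hf, p, hp, rfl⟩ := hc
  obtain ⟨l, hl, u, hu, rfl⟩ := H.exists_of_mem_parabolic hι hx ho hk hp
  obtain ⟨u', hu', s, rfl⟩ := H.exists_eq_mul_of_mem_positionSubgroup
    (Finset.disjoint_singleton_left.2 ho) (Finset.mem_singleton_self o) hj
    (A' := {o}) (B' := J.erase j) (by grind) hu
  have hoj : o ≠ j := (ne_of_mem_of_not_mem hj ho).symm
  refine ⟨s, fun t hst => ?_⟩
  set r := t / (1 + s * t)
  have h_swap := H.mul_swap hι hx hoj hst
  have h_col : l * x j o r * l⁻¹ ∈ positionSubgroup x J {o} :=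
    (Subgroup.mem_normalizer_iff.1 (H.levi_le_normalizer_col hι hx ho hk hl) _).1
      (mem_positionSubgroup x hj (Finset.mem_singleton_self o) hoj.symm r)
  have h_torus : torus x o j (1 + s * t) ∈ parabolic x o k J :=
    Subgroup.mem_sup_left (H.torus_mem_levi hι ho hk hj hst)
  have h_row : x o j (s / (1 + s * t)) ∈ parabolic x o k J :=
    Subgroup.mem_sup_right (mem_positionSubgroup x (Finset.mem_singleton_self o) hj hoj _)
  refine ⟨f * (l * x j o r * l⁻¹), mul_mem hf h_col,
    l * ((x j o r)⁻¹ * u' * x j o r) * torus x o j (1 + s * t) * x o j (s / (1 + s * t)),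
    mul_mem (mul_mem (mul_mem (Subgroup.mem_sup_left hl) (H.conj_mem_parabolic k ho hj hu' r))
      h_torus) h_row, ?_⟩
  calc _ = f * l * u' * (x j o r * torus x o j (1 + s * t) * x o j (s / (1 + s * t))) := by group
    _ = f * (l * (u' * x o j s)) * x j o t := by
      rw [← h_swap]
      group

lemma exists_of_mem_bigCell {o k : ι} {J : Finset ι} (ho : o ∉ J) (hk : k ∈ J) {y : G}
    (hy : y ∈ bigCell x o k J) :
    ∃ f ∈ positionSubgroup x J {o}, ∃ s ≠ 0, ∃ m ∈ positionSubgroup x J J,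
      ∃ u ∈ positionSubgroup x {o} J, y = f * (torus x o k s * m) * u := by
  obtain ⟨f, hf, p, hp, rfl⟩ := hy
  obtain ⟨l, hl, u, hu, rfl⟩ := H.exists_of_mem_parabolic hι hx ho hk hp
  obtain ⟨s, hs, m, hm, rfl⟩ :=
    H.exists_of_mem_levi hι hx (ne_of_mem_of_not_mem hk ho).symm hl
  exact ⟨f, hf, s, hs, m, hm, u, hu, (mul_assoc _ _ _).symm⟩

end Torus

end IsSteinberg

end Cell

section Density

variable {ι K G : Type*} [Field K] [Group G] {x : ι → ι → K → G}

/-- The functions on `G` that are polynomial along every translate of every one-parameter family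
`x i j`; they stand in for the regular functions on an algebraic group. -/
def regularAlong (x : ι → ι → K → G) : Subalgebra K (G → K) where
  carrier := {F | ∀ a b i j, i ≠ j → (fun t => F (a * x i j t * b)) ∈ polynomialMaps K}
  mul_mem' hF hF' a b i j hij := mul_mem (hF a b i j hij) (hF' a b i j hij)
  add_mem' hF hF' a b i j hij := add_mem (hF a b i j hij) (hF' a b i j hij)
  algebraMap_mem' r _ _ _ _ _ := (polynomialMaps K).algebraMap_mem r

lemma mul_right_mem_regularAlong {F : G → K} (hF : F ∈ regularAlong x) (g : G) :
    (fun y => F (y * g)) ∈ regularAlong x := fun a b i j hij => by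
  simpa only [mul_assoc] using hF a (b * g) i j hij

lemma mem_polynomialMaps_of_mem_regularAlong {F : G → K} (hF : F ∈ regularAlong x) (a : G)
    {i j : ι} (hij : i ≠ j) : (fun t => F (a * x i j t)) ∈ polynomialMaps K := by
  simpa only [mul_one] using hF a 1 i j hij

variable [Fintype ι] [DecidableEq ι]

lemma IsSteinberg.eq_zero_of_regularAlong [Infinite K] (H : IsSteinberg x)
    (hι : 2 < Fintype.card ι) (hx : IsTorusMultiplicative x) {o k : ι} {J : Finset ι}
    (ho : o ∉ J) (hk : k ∈ J) {F : G → K} (hF : F ∈ regularAlong x)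
    (h_cell : ∀ c ∈ bigCell x o k J, F c = 0) {g : G}
    (hg : g ∈ positionSubgroup x (insert o J) (insert o J)) : F g = 0 := by
  suffices h : ∀ F ∈ regularAlong x, (∀ c ∈ bigCell x o k J, F c = 0) →
      ∀ c ∈ bigCell x o k J, F (c * g) = 0 by
    simpa using h F hF h_cell 1 ⟨1, one_mem _, 1, one_mem _, mul_one 1⟩
  refine H.induction_right (p := fun g => ∀ F ∈ regularAlong x,
    (∀ c ∈ bigCell x o k J, F c = 0) → ∀ c ∈ bigCell x o k J, F (c * g) = 0) (by simp) ?_ hg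
  intro g ih i hi j hj hij t F hF h_cell c hc
  rw [← mul_assoc]
  refine ih _ (mul_right_mem_regularAlong hF (x i j t)) (fun c hc => ?_) c hc
  rcases Finset.mem_insert.1 hj with rfl | hjJ
  · have hiJ := Finset.mem_of_mem_insert_of_ne hi hij
    obtain ⟨s, hs⟩ := H.exists_mul_mem_bigCell hι hx ho hk hiJ hc
    have h_finite : {t | 1 + s * t = 0}.Finite :=
      Set.Subsingleton.finite fun t ht t' ht' => by
        have hs : s ≠ 0 := by
          rintro rfl
          simp at ht
        exact mul_left_cancel₀ hs (add_left_cancel (ht.trans ht'.symm))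
    refine eq_zero_of_mem_polynomialMaps (mem_polynomialMaps_of_mem_regularAlong hF c hij)
      (h_finite.infinite_compl.mono fun t ht => h_cell _ (hs t ht)) t
  · refine h_cell _ (mul_mem_bigCell hc ?_)
    rcases Finset.mem_insert.1 hi with rfl | hiJ
    · exact Subgroup.mem_sup_right
        (mem_positionSubgroup x (Finset.mem_singleton_self i) hjJ hij t)
    · exact Subgroup.mem_sup_left (Subgroup.mem_sup_right (mem_positionSubgroup x hiJ hjJ hij t))

lemma IsSteinberg.mem_coordinateAlgebra_of_regularAlong [Infinite K] {σ : Type*}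
    (H : IsSteinberg x) (hι : 2 < Fintype.card ι) (hx : IsTorusMultiplicative x) {o k : ι}
    {J : Finset ι} (ho : o ∉ J) (hk : k ∈ J) {c : σ → G → K} (hc : ∀ q, c q ∈ regularAlong x)
    {F : G → K} (hF : F ∈ regularAlong x)
    (h_cell : (fun y : bigCell x o k J => F y) ∈
      coordinateAlgebra fun q (y : bigCell x o k J) => c q y) :
    (fun y : positionSubgroup x (insert o J) (insert o J) => F y) ∈
      coordinateAlgebra fun q (y : positionSubgroup x (insert o J) (insert o J)) => c q y := by
  obtain ⟨P, hP⟩ := mem_coordinateAlgebra.1 h_cell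
  have h_poly : (fun y => MvPolynomial.eval (fun q => c q y) P) ∈ regularAlong x :=
    coordinateAlgebra_le hc (mem_coordinateAlgebra.2 ⟨P, fun _ => rfl⟩)
  refine mem_coordinateAlgebra.2 ⟨P, fun y => sub_eq_zero.1 ?_⟩
  exact H.eq_zero_of_regularAlong hι hx ho hk (sub_mem hF h_poly)
    (fun y hy => sub_eq_zero.2 (hP ⟨y, hy⟩)) y.2

end Density

section PolynomialGraphs

variable {ι m R K Y : Type*} [Fintype ι] [DecidableEq ι] [Fintype m] [DecidableEq m] [CommRing R]
  [Field K]

/-- A subgroup of `SL × GL` is a polynomial graph if the entries of the second component of its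
elements are polynomials in the entries of the first one. -/
def IsPolynomialGraph (Γ : Subgroup (Matrix.SpecialLinearGroup ι R × GL m R)) : Prop :=
  EntriesIn (coordinateAlgebra fun (q : ι × ι) (y : Γ) => (y.1.1 : Matrix ι ι R) q.1 q.2)
    fun y => (y.1.2 : Matrix m m R)

lemma IsPolynomialGraph.entriesIn {Γ : Subgroup (Matrix.SpecialLinearGroup ι R × GL m R)}
    (hΓ : IsPolynomialGraph Γ) {A : Subalgebra R (Y → R)}
    {g : Y → Matrix.SpecialLinearGroup ι R × GL m R} (hg : ∀ y, g y ∈ Γ)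
    (h : EntriesIn A fun y => ((g y).1 : Matrix ι ι R)) :
    EntriesIn A fun y => ((g y).2 : Matrix m m R) := fun a b =>
  comp_mem_of_mem_coordinateAlgebra (hΓ a b) (g := fun y => (⟨g y, hg y⟩ : Γ))
    fun q => h q.1 q.2

lemma isPolynomialGraph_bot :
    IsPolynomialGraph (⊥ : Subgroup (Matrix.SpecialLinearGroup ι R × GL m R)) := by
  have h (y : (⊥ : Subgroup (Matrix.SpecialLinearGroup ι R × GL m R))) :
      (y.1.2 : Matrix m m R) = 1 := by
    rw [Subgroup.mem_bot.1 y.2, Prod.snd_one, Units.val_one]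
  simpa only [IsPolynomialGraph, h] using EntriesIn.const 1

lemma entriesIn_coordinates (Γ : Set (Matrix.SpecialLinearGroup ι R × GL m R)) :
    EntriesIn (coordinateAlgebra fun (q : ι × ι) (y : Γ) => (y.1.1 : Matrix ι ι R) q.1 q.2)
      fun y => (y.1.1 : Matrix ι ι R) :=
  fun a b => coord_mem_coordinateAlgebra _ (a, b)

lemma apply_eq_one_apply_of_mem_positionSubgroup {A B : Finset ι}
    {g : Matrix.SpecialLinearGroup ι K} (hg : g ∈ positionSubgroup elem A B) {p q : ι}
    (hpq : ¬(p ∈ A ∧ q ∈ B)) : (g : Matrix ι ι K) p q = (1 : Matrix ι ι K) p q := by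
  refine isSteinberg_elem.induction_right (p := fun g : Matrix.SpecialLinearGroup ι K =>
    ∀ p q, ¬(p ∈ A ∧ q ∈ B) → (g : Matrix ι ι K) p q = (1 : Matrix ι ι K) p q)
    (fun _ _ _ => rfl) (fun g ih i hi j hj hij t p q hpq => ?_) hg p q hpq
  have h_row : ((g * elem i j t : Matrix.SpecialLinearGroup ι K) : Matrix ι ι K) p =
      (g : Matrix ι ι K) p + Pi.single j ((g : Matrix ι ι K) p i * t) :=
    vecMul_elem hij _ t
  rw [h_row, Pi.add_apply, ih p q hpq]
  rcases eq_or_ne q j with rfl | hqj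
  · have hp : p ∉ A := fun hp => hpq ⟨hp, hj⟩
    rw [ih p i fun h => hp h.1, one_apply_ne (ne_of_mem_of_not_mem hi hp).symm, zero_mul,
      Pi.single_zero, Pi.zero_apply, add_zero]
  · rw [Pi.single_eq_of_ne hqj, add_zero]

lemma fst_mem_positionSubgroup {x : ι → ι → R → GL m R} {A B : Finset ι}
    {y : Matrix.SpecialLinearGroup ι R × GL m R} (hy : y ∈ positionSubgroup (graphFamily x) A B) :
    y.1 ∈ positionSubgroup elem A B := by
  have h := positionSubgroup_le_comap (MonoidHom.fst _ _) (graphFamily x) A B hy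
  exact h

lemma IsPolynomialGraph.of_mul_elem {x : ι → ι → K → GL m K} (hx : IsPolynomialFamily x)
    {Γ Γ' : Subgroup (Matrix.SpecialLinearGroup ι K × GL m K)} (hΓ' : IsPolynomialGraph Γ')
    {i j : ι} (hij : i ≠ j)
    (h : ∀ y : Γ, ∃ y' ∈ Γ', y.1 = y' * graphFamily x i j ((y.1.1 : Matrix ι ι K) i j)) :
    IsPolynomialGraph Γ := by
  choose f hf h_eq using h
  have h_coord := entriesIn_coordinates (Γ : Set (Matrix.SpecialLinearGroup ι K × GL m K))
  have h_fst (y : Γ) : (y.1.1 : Matrix ι ι K) * (elem i j (-(y.1.1 : Matrix ι ι K) i j) :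
      Matrix.SpecialLinearGroup ι K) = (f y).1 := by
    rw [isSteinberg_elem.neg hij, ← Matrix.SpecialLinearGroup.coe_mul]
    exact congrArg (fun g : Matrix.SpecialLinearGroup ι K => (g : Matrix ι ι K))
      (mul_inv_eq_of_eq_mul (congrArg Prod.fst (h_eq y)))
  have h_snd (y : Γ) : (y.1.2 : Matrix m m K) =
      (f y).2 * (x i j ((y.1.1 : Matrix ι ι K) i j) : GL m K) :=
    congrArg (fun z => (z.2 : Matrix m m K)) (h_eq y)
  simp only [IsPolynomialGraph, h_snd]
  refine (hΓ'.entriesIn hf ?_).mul ((hx hij).comp_polynomialMaps (h_coord i j))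
  simp only [← h_fst]
  exact h_coord.mul ((entriesIn_elem hij).comp_polynomialMaps (Subalgebra.neg_mem _ (h_coord i j)))

lemma IsPolynomialGraph.of_positionSubgroup {x : ι → ι → K → GL m K} (H : IsSteinberg x)
    (hx : IsPolynomialFamily x) {A A' B B' : Finset ι} (hAB : Disjoint A B) {i j : ι}
    (hi : i ∈ A) (hj : j ∈ B) (h : ∀ p ∈ A, ∀ q ∈ B, (p = i ∧ q = j) ∨ (p ∈ A' ∧ q ∈ B'))
    (hB' : B' ⊆ B) (hij : ¬(i ∈ A' ∧ j ∈ B'))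
    (hΓ : IsPolynomialGraph (positionSubgroup (graphFamily x) A' B')) :
    IsPolynomialGraph (positionSubgroup (graphFamily x) A B) := by
  have h_ne : i ≠ j := fun hij => Finset.disjoint_left.1 hAB hi (hij ▸ hj)
  have hiB : i ∉ B' := fun hi' => Finset.disjoint_left.1 hAB hi (hB' hi')
  refine hΓ.of_mul_elem hx h_ne fun y => ?_
  obtain ⟨y', hy', s, hy⟩ := H.graphFamily.exists_eq_mul_of_mem_positionSubgroup hAB hi hj h y.2
  suffices hs : (y.1.1 : Matrix ι ι K) i j = s from ⟨y', hy', hs ▸ hy⟩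
  have h_fst := fst_mem_positionSubgroup hy'
  have h_row : (y.1.1 : Matrix ι ι K) i = (y'.1 : Matrix ι ι K) i +
      Pi.single j ((y'.1 : Matrix ι ι K) i i * s) := by
    rw [hy]
    exact vecMul_elem h_ne _ s
  rw [h_row, Pi.add_apply, Pi.single_eq_same, apply_eq_one_apply_of_mem_positionSubgroup h_fst hij,
    apply_eq_one_apply_of_mem_positionSubgroup h_fst fun h => hiB h.2, one_apply_ne h_ne,
    one_apply_eq, zero_add, one_mul]

lemma isPolynomialGraph_row {x : ι → ι → K → GL m K} (H : IsSteinberg x)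
    (hx : IsPolynomialFamily x) {o : ι} {J : Finset ι} (ho : o ∉ J) :
    IsPolynomialGraph (positionSubgroup (graphFamily x) {o} J) := by
  induction J using Finset.induction_on with
  | empty =>
    rw [positionSubgroup_eq_bot (by simp)]
    exact isPolynomialGraph_bot
  | insert j J hj ih =>
    exact .of_positionSubgroup H hx (Finset.disjoint_singleton_left.2 ho)
      (Finset.mem_singleton_self o) (Finset.mem_insert_self j J) (by grind)
      (Finset.subset_insert j J) (fun h => hj h.2) (ih (by grind))

lemma isPolynomialGraph_col {x : ι → ι → K → GL m K} (H : IsSteinberg x)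
    (hx : IsPolynomialFamily x) {o : ι} {J : Finset ι} (ho : o ∉ J) :
    IsPolynomialGraph (positionSubgroup (graphFamily x) J {o}) := by
  induction J using Finset.induction_on with
  | empty =>
    rw [positionSubgroup_eq_bot (by simp)]
    exact isPolynomialGraph_bot
  | insert j J hj ih =>
    exact .of_positionSubgroup H hx (Finset.disjoint_singleton_right.2 ho)
      (Finset.mem_insert_self j J) (Finset.mem_singleton_self o) (by grind)
      subset_rfl (fun h => hj h.1) (ih (by grind))

end PolynomialGraphs

section CellCoordinates

variable {ι m K : Type*} [Fintype ι] [DecidableEq ι] [Fintype m] [DecidableEq m] [Field K]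

lemma single_vecMul_weyl_elem {i j : ι} (hij : i ≠ j) {s : K} (hs : s ≠ 0) (p : ι) (a : K) :
    (Pi.single p a : ι → K) ᵥ*
        ((weyl elem i j s : Matrix.SpecialLinearGroup ι K) : Matrix ι ι K) =
      Pi.single (Equiv.swap i j p) (a * weylScale i j s (Equiv.swap i j p)) := by
  simp only [weyl, Matrix.SpecialLinearGroup.coe_mul, ← vecMul_vecMul, vecMul_elem hij,
    vecMul_elem hij.symm]
  rcases eq_or_ne p i with rfl | hpi
  · simp only [Pi.single_eq_same, Pi.add_apply, ne_eq, hij, hij.symm, not_false_eq_true,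
      Pi.single_eq_of_ne, zero_add, mul_neg, hs, mul_inv_cancel_right₀, add_assoc, add_zero,
      add_neg_cancel, zero_mul, Pi.single_zero, Equiv.swap_apply_left, weylScale, ↓reduceIte]
    rw [add_left_comm, ← Pi.single_add, add_neg_cancel, Pi.single_zero, add_zero]
  rcases eq_or_ne p j with rfl | hpj
  · simp only [ne_eq, hij, not_false_eq_true, Pi.single_eq_of_ne, zero_mul, Pi.single_zero,
      add_zero, Pi.add_apply, Pi.single_eq_same, Pi.zero_apply, mul_neg, zero_add, neg_mul, hs,
      inv_mul_cancel_right₀, add_assoc, Equiv.swap_apply_right, weylScale, ↓reduceIte]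
    rw [add_left_comm, ← Pi.single_add, add_neg_cancel, Pi.single_zero, add_zero]
  · simp [weylScale, hpi, hpj, hpi.symm, hpj.symm, Equiv.swap_apply_of_ne_of_ne]

lemma coe_torus_elem {i j : ι} (hij : i ≠ j) {s : K} (hs : s ≠ 0) :
    ((torus elem i j s : Matrix.SpecialLinearGroup ι K) : Matrix ι ι K) =
      diagonal (torusScale i j s) := by
  refine ext_of_single_vecMul fun p => ?_
  rw [torus, Matrix.SpecialLinearGroup.coe_mul, ← vecMul_vecMul, single_vecMul_weyl_elem hij hs,
    single_vecMul_weyl_elem hij (neg_ne_zero.2 one_ne_zero), Equiv.swap_apply_self, one_mul,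
    weylScale_swap_mul hij, single_vecMul_diagonal, one_mul]

lemma mul_apply_of_row {M M' : Matrix ι ι K} {o : ι} {s : K}
    (h : ∀ q, M o q = s * (1 : Matrix ι ι K) o q) (q : ι) : (M * M') o q = s * M' o q := by
  simp [mul_apply, h, one_apply]

lemma mul_apply_of_col {M M' : Matrix ι ι K} {o : ι} {s : K}
    (h : ∀ p, M' p o = s * (1 : Matrix ι ι K) p o) (p : ι) : (M * M') p o = s * M p o := by
  simp [mul_apply, h, one_apply, mul_comm]

section

variable {o k : ι} {J : Finset ι} (ho : o ∉ J) (hok : o ≠ k) {s : K} (hs : s ≠ 0)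
  {f m u : Matrix.SpecialLinearGroup ι K} (hf : f ∈ positionSubgroup elem J {o})
  (hm : m ∈ positionSubgroup elem J J) (hu : u ∈ positionSubgroup elem {o} J)

include ho hok hs hm

include hf in
lemma bigCell_row (q : ι) : ((f * (torus elem o k s * m) * u : Matrix.SpecialLinearGroup ι K) :
    Matrix ι ι K) o q = s * (u : Matrix ι ι K) o q := by
  have h_f (q : ι) : (f : Matrix ι ι K) o q = 1 * (1 : Matrix ι ι K) o q := by
    rw [apply_eq_one_apply_of_mem_positionSubgroup hf fun h => ho h.1, one_mul]
  have h_m (q : ι) : (m : Matrix ι ι K) o q = (1 : Matrix ι ι K) o q :=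
    apply_eq_one_apply_of_mem_positionSubgroup hm fun h => ho h.1
  simp only [Matrix.SpecialLinearGroup.coe_mul, coe_torus_elem hok hs]
  refine mul_apply_of_row (fun q => ?_) q
  rw [mul_apply_of_row h_f, one_mul, diagonal_mul, h_m, torusScale, if_pos rfl]

include hu in
lemma bigCell_col (p : ι) : ((f * (torus elem o k s * m) * u : Matrix.SpecialLinearGroup ι K) :
    Matrix ι ι K) p o = s * (f : Matrix ι ι K) p o := by
  have h_u (p : ι) : (u : Matrix ι ι K) p o = 1 * (1 : Matrix ι ι K) p o := by
    rw [apply_eq_one_apply_of_mem_positionSubgroup hu fun h => ho h.2, one_mul]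
  have h_m (p : ι) : (m : Matrix ι ι K) p o = 1 * (1 : Matrix ι ι K) p o := by
    rw [apply_eq_one_apply_of_mem_positionSubgroup hm fun h => ho h.2, one_mul]
  simp only [Matrix.SpecialLinearGroup.coe_mul, coe_torus_elem hok hs]
  rw [mul_apply_of_col h_u, one_mul, mul_apply_of_col fun p => ?_]
  rw [mul_apply_of_col h_m, one_mul, diagonal_apply, one_apply]
  split_ifs with hpo
  · rw [hpo, torusScale, if_pos rfl, mul_one]
  · rw [mul_zero]

end

variable {Y : Type*} {A : Subalgebra K (Y → K)}

lemma entriesIn_of_mem_positionSubgroup {B C : Finset ι} {g : Y → Matrix.SpecialLinearGroup ι K}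
    (hg : ∀ z, g z ∈ positionSubgroup elem B C)
    (h : ∀ p ∈ B, ∀ q ∈ C, (fun z => (g z : Matrix ι ι K) p q) ∈ A) :
    EntriesIn A fun z => (g z : Matrix ι ι K) := fun p q => by
  by_cases hpq : p ∈ B ∧ q ∈ C
  · exact h p hpq.1 q hpq.2
  · simp only [apply_eq_one_apply_of_mem_positionSubgroup (hg _) hpq]
    exact EntriesIn.const 1 p q

lemma entriesIn_inv {g : Y → Matrix.SpecialLinearGroup ι K}
    (hg : EntriesIn A fun y => (g y : Matrix ι ι K)) :
    EntriesIn A fun y => ((g y)⁻¹ : Matrix.SpecialLinearGroup ι K).1 := by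
  simpa only [Matrix.SpecialLinearGroup.coe_inv] using hg.adjugate

lemma entriesIn_torus_elem {i j : ι} (hij : i ≠ j) {s : Y → K} (hs : s ∈ A)
    (hs' : (fun y => (s y)⁻¹) ∈ A) :
    EntriesIn A fun y => ((torus elem i j (s y) : Matrix.SpecialLinearGroup ι K) :
      Matrix ι ι K) := by
  have h := IsPolynomialFamily.entriesIn_torus
    (x := fun i j t => Matrix.SpecialLinearGroup.toGL (elem i j t))
    (fun _ _ hij => entriesIn_elem hij) hij hs hs'
  simp only [map_torus] at h
  exact h

lemma bigCell_coordinates {x : ι → ι → K → GL m K} (H : IsSteinberg x)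
    (hX : IsTorusMultiplicative (graphFamily x)) (hι : 2 < Fintype.card ι) {o k : ι}
    {J : Finset ι} (ho : o ∉ J) (hk : k ∈ J) {y : Matrix.SpecialLinearGroup ι K × GL m K}
    (hy : y ∈ bigCell (graphFamily x) o k J) :
    (y.1 : Matrix ι ι K) o o ≠ 0 ∧ ∃ f ∈ positionSubgroup (graphFamily x) J {o},
      ∃ l ∈ positionSubgroup (graphFamily x) J J, ∃ u ∈ positionSubgroup (graphFamily x) {o} J,
        y = f * (torus (graphFamily x) o k ((y.1 : Matrix ι ι K) o o) * l) * u ∧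
        (∀ p, (y.1 : Matrix ι ι K) p o = (y.1 : Matrix ι ι K) o o * (f.1 : Matrix ι ι K) p o) ∧
        ∀ q, (y.1 : Matrix ι ι K) o q = (y.1 : Matrix ι ι K) o o * (u.1 : Matrix ι ι K) o q := by
  obtain ⟨f, hf, s, hs, l, hl, u, hu, hy⟩ := H.graphFamily.exists_of_mem_bigCell hι hX ho hk hy
  have hok : o ≠ k := (ne_of_mem_of_not_mem hk ho).symm
  have hf' := fst_mem_positionSubgroup hf
  have hl' := fst_mem_positionSubgroup hl
  have hu' := fst_mem_positionSubgroup hu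
  have h_fst : y.1 = f.1 * (torus elem o k s * l.1) * u.1 := by
    rw [hy, torus_graphFamily]
    rfl
  have h_row (q : ι) : (y.1 : Matrix ι ι K) o q = s * (u.1 : Matrix ι ι K) o q := by
    rw [h_fst, bigCell_row ho hok hs hf' hl']
  have h_col (p : ι) : (y.1 : Matrix ι ι K) p o = s * (f.1 : Matrix ι ι K) p o := by
    rw [h_fst, bigCell_col ho hok hs hl' hu']
  have h_diag : (y.1 : Matrix ι ι K) o o = s := by
    rw [h_row, apply_eq_one_apply_of_mem_positionSubgroup hu' fun h => ho h.2, one_apply_eq,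
      mul_one]
  rw [h_diag]
  exact ⟨hs, f, hf, l, hl, u, hu, hy, h_col, h_row⟩

theorem entriesIn_bigCell {x : ι → ι → K → GL m K} (H : IsSteinberg x)
    (hx : IsPolynomialFamily x) (hX : IsTorusMultiplicative (graphFamily x))
    (hι : 2 < Fintype.card ι) {o k : ι} {J : Finset ι} (ho : o ∉ J) (hk : k ∈ J)
    (hJ : IsPolynomialGraph (positionSubgroup (graphFamily x) J J))
    {y : Y → Matrix.SpecialLinearGroup ι K × GL m K}
    (hy : ∀ z, y z ∈ bigCell (graphFamily x) o k J)
    (h_coord : EntriesIn A fun z => ((y z).1 : Matrix ι ι K))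
    (h_inv : (fun z => (((y z).1 : Matrix ι ι K) o o)⁻¹) ∈ A) :
    EntriesIn A fun z => ((y z).2 : Matrix m m K) := by
  have hok : o ≠ k := (ne_of_mem_of_not_mem hk ho).symm
  choose hs f hf l hl u hu h_eq h_col h_row using
    fun z => bigCell_coordinates H hX hι ho hk (hy z)
  set s : Y → K := fun z => ((y z).1 : Matrix ι ι K) o o
  have h_div {g g' : Y → K} (hg : g ∈ A) (h : ∀ z, g z = s z * g' z) : g' ∈ A := by
    convert A.mul_mem h_inv hg
    ext z
    rw [Pi.mul_apply, h, inv_mul_cancel_left₀ (hs z)]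
  have h_f : EntriesIn A fun z => ((f z).1 : Matrix ι ι K) :=
    entriesIn_of_mem_positionSubgroup (fun z => fst_mem_positionSubgroup (hf z))
      fun p _ q hq => h_div (h_coord p q) (Finset.mem_singleton.1 hq ▸ fun z => h_col z p)
  have h_u : EntriesIn A fun z => ((u z).1 : Matrix ι ι K) :=
    entriesIn_of_mem_positionSubgroup (fun z => fst_mem_positionSubgroup (hu z))
      fun p hp q _ => h_div (h_coord p q) (Finset.mem_singleton.1 hp ▸ fun z => h_row z q)
  have h_torus := entriesIn_torus_elem hok (h_coord o o) h_inv
  have h_l : EntriesIn A fun z => ((l z).1 : Matrix ι ι K) := by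
    have h (z : Y) : (l z).1 = (torus elem o k (s z))⁻¹ * ((f z).1⁻¹ * ((y z).1 * (u z).1⁻¹)) := by
      have h_fst := congrArg Prod.fst (h_eq z)
      rw [torus_graphFamily] at h_fst
      rw [eq_inv_mul_iff_mul_eq, eq_inv_mul_iff_mul_eq, eq_mul_inv_iff_mul_eq]
      exact h_fst.symm
    simp only [h, Matrix.SpecialLinearGroup.coe_mul]
    exact (entriesIn_inv h_torus).mul ((entriesIn_inv h_f).mul (h_coord.mul (entriesIn_inv h_u)))
  have h_snd (z : Y) : ((y z).2 : Matrix m m K) = ((f z).2 : Matrix m m K) *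
      (((torus x o k (s z) : GL m K) : Matrix m m K) * (l z).2) * (u z).2 := by
    have h_snd := congrArg Prod.snd (h_eq z)
    rw [torus_graphFamily] at h_snd
    exact congrArg Units.val h_snd
  simp only [h_snd]
  exact (((isPolynomialGraph_col H hx ho).entriesIn hf h_f).mul
    ((hx.entriesIn_torus hok (h_coord o o) h_inv).mul (hJ.entriesIn hl h_l))).mul
    ((isPolynomialGraph_row H hx ho).entriesIn hu h_u)

end CellCoordinates

section ClearingDenominators

variable {R Y l m : Type*} [CommRing R]

lemma EntriesIn.exists_pow_smul [Finite l] [Finite m] {A : Subalgebra R (Y → R)} {d e : Y → R}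
    (hd : d ∈ A) (hde : d * e = 1) {φ : Y → Matrix l m R}
    (hφ : EntriesIn (Algebra.adjoin R (insert e (A : Set (Y → R)))) φ) :
    ∃ k : ℕ, EntriesIn A fun y => d y ^ k • φ y := by
  cases nonempty_fintype l
  cases nonempty_fintype m
  choose k hk using fun p : l × m =>
    exists_pow_mul_mem_of_mem_adjoin_insert hd hde (hφ p.1 p.2)
  refine ⟨Finset.univ.sup k, fun a b => ?_⟩
  obtain ⟨r, hr⟩ := Nat.exists_eq_add_of_le' (Finset.le_sup (f := k) (Finset.mem_univ (a, b)))
  have h := A.mul_mem (A.pow_mem hd r) (hk (a, b))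
  rw [← mul_assoc, ← pow_add, ← hr] at h
  exact h

/-- The ideal of denominators of a matrix of functions with respect to an algebra of functions. -/
def conductor (A : Subalgebra R (Y → R)) (φ : Y → Matrix l m R) : Ideal A where
  carrier := {c | EntriesIn A fun y => c.1 y • φ y}
  add_mem' {c c'} hc hc' a b := by
    convert A.add_mem (hc a b) (hc' a b) using 1
    ext y
    simp [add_mul]
  zero_mem' a b := by
    convert A.zero_mem using 1
    ext y
    simp
  smul_mem' c c' hc' a b := by
    convert A.mul_mem c.2 (hc' a b) using 1
    ext y
    simp [mul_assoc]

lemma one_mem_conductor {A : Subalgebra R (Y → R)} {φ : Y → Matrix l m R} :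
    1 ∈ conductor A φ ↔ EntriesIn A φ := by
  change EntriesIn A (fun y => (1 : R) • φ y) ↔ _
  simp only [one_smul]

end ClearingDenominators

section ParabolicInduction

variable {ι m K : Type*} [Fintype ι] [DecidableEq ι] [Fintype m] [DecidableEq m] [Field K]

lemma fst_apply_mem_regularAlong (x : ι → ι → K → GL m K) (p q : ι) :
    (fun y : Matrix.SpecialLinearGroup ι K × GL m K => (y.1 : Matrix ι ι K) p q) ∈
      regularAlong (graphFamily x) := fun c d i j hij => by
  have h : EntriesIn (polynomialMaps K) fun t =>
      (c.1 : Matrix ι ι K) *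
        ((elem i j t : Matrix.SpecialLinearGroup ι K) : Matrix ι ι K) * (d.1 : Matrix ι ι K) :=
    ((EntriesIn.const _).mul (entriesIn_elem hij)).mul (EntriesIn.const _)
  exact h p q

lemma snd_apply_mem_regularAlong {x : ι → ι → K → GL m K} (hx : IsPolynomialFamily x) (a b : m) :
    (fun y : Matrix.SpecialLinearGroup ι K × GL m K => (y.2 : Matrix m m K) a b) ∈
      regularAlong (graphFamily x) := fun c d i j hij => by
  have h : EntriesIn (polynomialMaps K) fun t =>
      (c.2 : Matrix m m K) * ((x i j t : GL m K) : Matrix m m K) * (d.2 : Matrix m m K) :=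
    ((EntriesIn.const _).mul (hx hij)).mul (EntriesIn.const _)
  exact h a b

theorem exists_pow_smul_entriesIn [Infinite K] {x : ι → ι → K → GL m K} (H : IsSteinberg x)
    (hx : IsPolynomialFamily x) (hX : IsTorusMultiplicative (graphFamily x))
    (hι : 2 < Fintype.card ι) {o k : ι} {J : Finset ι} (ho : o ∉ J) (hk : k ∈ J)
    (hJ : IsPolynomialGraph (positionSubgroup (graphFamily x) J J)) :
    ∃ r : ℕ, EntriesIn (coordinateAlgebra fun (q : ι × ι)
        (y : positionSubgroup (graphFamily x) (insert o J) (insert o J)) =>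
          (y.1.1 : Matrix ι ι K) q.1 q.2)
      fun y => (y.1.1 : Matrix ι ι K) o o ^ r • (y.1.2 : Matrix m m K) := by
  let C := bigCell (graphFamily x) o k J
  let A := coordinateAlgebra fun (q : ι × ι) (y : C) => (y.1.1 : Matrix ι ι K) q.1 q.2
  let e : C → K := fun y => ((y.1.1 : Matrix ι ι K) o o)⁻¹
  have h_coord := entriesIn_coordinates C
  have hde : (fun y : C => (y.1.1 : Matrix ι ι K) o o) * e = 1 :=
    funext fun y => mul_inv_cancel₀ (bigCell_coordinates H hX hι ho hk y.2).1
  have h_cell : EntriesIn (Algebra.adjoin K (insert e (A : Set (C → K))))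
      fun y => (y.1.2 : Matrix m m K) :=
    entriesIn_bigCell H hx hX hι ho hk hJ (fun y => y.2)
      (h_coord.mono fun _ h => Algebra.subset_adjoin (Set.mem_insert_of_mem e h))
      (Algebra.subset_adjoin (Set.mem_insert e _))
  obtain ⟨r, hr⟩ := h_cell.exists_pow_smul (h_coord o o) hde
  refine ⟨r, fun a b => ?_⟩
  have h_mul := Subalgebra.mul_mem _ (Subalgebra.pow_mem _ (fst_apply_mem_regularAlong x o o) r)
    (snd_apply_mem_regularAlong hx a b)
  have h := H.graphFamily.mem_coordinateAlgebra_of_regularAlong hι hX ho hk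
    (fun q : ι × ι => fst_apply_mem_regularAlong x q.1 q.2) h_mul (hr a b)
  exact h

section Translation

variable {Γ : Subgroup (Matrix.SpecialLinearGroup ι K × GL m K)}

/-- The denominators of the second component of `Γ` with respect to the polynomials in the entries
of the first one. -/
noncomputable def graphConductor (Γ : Subgroup (Matrix.SpecialLinearGroup ι K × GL m K)) :
    Ideal (coordinateAlgebra fun (q : ι × ι) (y : Γ) => (y.1.1 : Matrix ι ι K) q.1 q.2) :=
  conductor _ fun y => (y.1.2 : Matrix m m K)

/-- An entry of the first component, as a function on `Γ`. -/
noncomputable def coordFun (Γ : Subgroup (Matrix.SpecialLinearGroup ι K × GL m K)) (q : ι × ι) :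
    coordinateAlgebra fun (q : ι × ι) (y : Γ) => (y.1.1 : Matrix ι ι K) q.1 q.2 :=
  ⟨_, coord_mem_coordinateAlgebra _ q⟩

lemma mem_radical_graphConductor
    {d : coordinateAlgebra fun (q : ι × ι) (y : Γ) => (y.1.1 : Matrix ι ι K) q.1 q.2} :
    d ∈ (graphConductor Γ).radical ↔ ∃ r : ℕ, EntriesIn
      (coordinateAlgebra fun (q : ι × ι) (y : Γ) => (y.1.1 : Matrix ι ι K) q.1 q.2)
      fun y => d.1 y ^ r • (y.1.2 : Matrix m m K) :=
  Iff.rfl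

lemma entriesIn_mul_right {d : Γ → K} (h : EntriesIn
      (coordinateAlgebra fun (q : ι × ι) (y : Γ) => (y.1.1 : Matrix ι ι K) q.1 q.2)
      fun y => d y • (y.1.2 : Matrix m m K)) (g : Γ) : EntriesIn
      (coordinateAlgebra fun (q : ι × ι) (y : Γ) => (y.1.1 : Matrix ι ι K) q.1 q.2)
      fun y => d (y * g) • (y.1.2 : Matrix m m K) := by
  have h_coord := (entriesIn_coordinates
    (Γ : Set (Matrix.SpecialLinearGroup ι K × GL m K))).mul (.const (g.1.1 : Matrix ι ι K))
  have h_translate : EntriesIn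
      (coordinateAlgebra fun (q : ι × ι) (y : Γ) => (y.1.1 : Matrix ι ι K) q.1 q.2)
      fun y => d (y * g) • ((y.1.2 : Matrix m m K) * (g.1.2 : Matrix m m K)) := fun a b =>
    comp_mem_of_mem_coordinateAlgebra (h a b) (g := fun y => y * g) fun q => h_coord q.1 q.2
  have h_eq (y : Γ) : d (y * g) • (y.1.2 : Matrix m m K) =
      d (y * g) • ((y.1.2 : Matrix m m K) * (g.1.2 : Matrix m m K)) *
        ((g.1.2⁻¹ : GL m K) : Matrix m m K) := by
    rw [smul_mul_assoc, mul_assoc, Units.mul_inv, mul_one]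
  simpa only [h_eq] using h_translate.mul (.const _)

lemma isPolynomialGraph_of_row_mem_radical {o : ι}
    (h : ∀ q, coordFun Γ (o, q) ∈ (graphConductor Γ).radical) : IsPolynomialGraph Γ := by
  have h_coord := entriesIn_coordinates (Γ : Set (Matrix.SpecialLinearGroup ι K × GL m K))
  have h_det : 1 = ∑ q, coordFun Γ (o, q) * ⟨_, h_coord.adjugate q o⟩ := Subtype.ext <| by
    ext y
    simpa [coordFun] using
      (y.1.1.det_coe.symm.trans (det_eq_sum_mul_adjugate_row (y.1.1 : Matrix ι ι K) o))
  refine one_mem_conductor.1 ((Ideal.eq_top_iff_one _).1 (Ideal.radical_eq_top.1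
    ((Ideal.eq_top_iff_one _).2 ?_)))
  rw [h_det]
  exact Ideal.sum_mem _ fun q _ => Ideal.mul_mem_right _ _ (h q)

end Translation

lemma coordFun_mem_radical_graphConductor {x : ι → ι → K → GL m K} {o q : ι} {J : Finset ι}
    (ho : o ∉ J) (hq : q ∈ J) {Γ : Subgroup (Matrix.SpecialLinearGroup ι K × GL m K)}
    (hΓ : Γ = positionSubgroup (graphFamily x) (insert o J) (insert o J))
    (h : coordFun Γ (o, o) ∈ (graphConductor Γ).radical) :
    coordFun Γ (o, q) ∈ (graphConductor Γ).radical := by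
  have hqo : q ≠ o := ne_of_mem_of_not_mem hq ho
  have h_mem : graphFamily x q o 1 ∈ Γ := hΓ ▸
    mem_positionSubgroup _ (Finset.mem_insert_of_mem hq) (Finset.mem_insert_self o J) hqo 1
  have h_entry (y : Γ) : ((y * ⟨_, h_mem⟩ : Γ).1.1 : Matrix ι ι K) o o =
      (y.1.1 : Matrix ι ι K) o o + (y.1.1 : Matrix ι ι K) o q := by
    have h_row : ((y * ⟨_, h_mem⟩ : Γ).1.1 : Matrix ι ι K) o = (y.1.1 : Matrix ι ι K) o +
        Pi.single o ((y.1.1 : Matrix ι ι K) o q * 1) := vecMul_elem hqo _ 1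
    rw [h_row, Pi.add_apply, Pi.single_eq_same, mul_one]
  obtain ⟨r, hr⟩ := mem_radical_graphConductor.1 h
  have h_translate := entriesIn_mul_right hr ⟨_, h_mem⟩
  have h_add : coordFun Γ (o, o) + coordFun Γ (o, q) ∈ (graphConductor Γ).radical := by
    refine mem_radical_graphConductor.2 ⟨r, ?_⟩
    convert h_translate using 4 with y
    exact (h_entry y).symm
  exact (Ideal.add_mem_iff_right _ h).1 h_add

lemma IsPolynomialGraph.positionSubgroup_insert [Infinite K] {x : ι → ι → K → GL m K}
    (H : IsSteinberg x) (hx : IsPolynomialFamily x) (hX : IsTorusMultiplicative (graphFamily x))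
    (hι : 2 < Fintype.card ι) {o k : ι} {J : Finset ι} (ho : o ∉ J) (hk : k ∈ J)
    (hJ : IsPolynomialGraph (positionSubgroup (graphFamily x) J J)) :
    IsPolynomialGraph (positionSubgroup (graphFamily x) (insert o J) (insert o J)) := by
  have h_oo := (mem_radical_graphConductor (d := coordFun _ (o, o))).2
    (exists_pow_smul_entriesIn H hx hX hι ho hk hJ)
  refine isPolynomialGraph_of_row_mem_radical (o := o) fun q => ?_
  by_cases hq : q ∈ insert o J
  · rcases Finset.mem_insert.1 hq with rfl | hqJ
    · exact h_oo
    · exact coordFun_mem_radical_graphConductor ho hqJ rfl h_oo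
  · have h_zero :
        coordFun (positionSubgroup (graphFamily x) (insert o J) (insert o J)) (o, q) = 0 :=
      Subtype.ext <| funext fun y => by
        have h := apply_eq_one_apply_of_mem_positionSubgroup (fst_mem_positionSubgroup y.2)
          (p := o) fun h => hq h.2
        rw [one_apply_ne fun h : o = q => hq (h ▸ Finset.mem_insert_self o J)] at h
        exact h
    rw [h_zero]
    exact Ideal.zero_mem _

theorem isPolynomialGraph_positionSubgroup [Infinite K] {x : ι → ι → K → GL m K}
    (H : IsSteinberg x) (hx : IsPolynomialFamily x) (hX : IsTorusMultiplicative (graphFamily x))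
    (hι : 2 < Fintype.card ι) {J : Finset ι} (hJ : J.Nonempty) :
    IsPolynomialGraph (positionSubgroup (graphFamily x) J J) := by
  induction hJ using Finset.Nonempty.cons_induction with
  | singleton o =>
    rw [positionSubgroup_eq_bot (by simp)]
    exact isPolynomialGraph_bot
  | cons o J ho hJ ih =>
    rw [Finset.cons_eq_insert]
    exact ih.positionSubgroup_insert H hx hX hι ho hJ.choose_spec

end ParabolicInduction

section Extension

variable {ι m : Type*} [Fintype ι] [DecidableEq ι] [Fintype m] [DecidableEq m]

lemma monoidHom_ext_elem {R G : Type*} [EuclideanDomain R] [Group G]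
    {f f' : Matrix.SpecialLinearGroup ι R →* G}
    (h : ∀ i j, i ≠ j → ∀ t, f (elem i j t) = f' (elem i j t)) : f = f' := by
  refine MonoidHom.eq_of_eqOn_top fun g hg => ?_
  rw [← positionSubgroup_elem_eq_top] at hg
  exact positionSubgroup_le (H := f.eqLocus f').2 (fun i _ j _ hij t => h i j hij t) hg

lemma exists_mem_positionSubgroup_graphFamily {R : Type*} [EuclideanDomain R]
    (x : ι → ι → R → GL m R) (g : Matrix.SpecialLinearGroup ι R) :
    ∃ y ∈ positionSubgroup (graphFamily x) Finset.univ Finset.univ, y.1 = g := by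
  have hg : g ∈ positionSubgroup elem Finset.univ Finset.univ :=
    positionSubgroup_elem_eq_top (ι := ι) (R := R) ▸ Subgroup.mem_top g
  have h_le : positionSubgroup (elem (R := R)) Finset.univ Finset.univ ≤
      (positionSubgroup (graphFamily x) Finset.univ Finset.univ).map (MonoidHom.fst _ _) :=
    positionSubgroup_le.2 fun i hi j hj hij t =>
      ⟨_, mem_positionSubgroup (graphFamily x) hi hj hij t, rfl⟩
  exact h_le hg

lemma IsPolynomialGraph.snd_eq {R : Type*} [CommRing R]
    {Γ : Subgroup (Matrix.SpecialLinearGroup ι R × GL m R)} (hΓ : IsPolynomialGraph Γ)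
    {y z : Γ} (h : y.1.1 = z.1.1) : y.1.2 = z.1.2 := by
  ext a b
  obtain ⟨P, hP⟩ := mem_coordinateAlgebra.1 (hΓ a b)
  refine (hP y).trans (Eq.trans ?_ (hP z).symm)
  rw [h]

theorem exists_monoidHom_of_isSteinberg (hι : 2 < Fintype.card ι)
    {x : ι → ι → ℂ → GL m ℂ} (H : IsSteinberg x) (hx : IsPolynomialFamily x) :
    ∃ ρ : Matrix.SpecialLinearGroup ι ℂ →* GL m ℂ,
      EntriesIn (coordinateAlgebra fun (q : ι × ι) (g : Matrix.SpecialLinearGroup ι ℂ) =>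
        (g : Matrix ι ι ℂ) q.1 q.2) (fun g => (ρ g : Matrix m m ℂ)) ∧
      ∀ i j, i ≠ j → ∀ t, ρ (elem i j t) = x i j t := by
  have : Nonempty ι := Fintype.card_pos_iff.1 (pos_of_gt hι)
  have h_poly := isPolynomialGraph_positionSubgroup H hx (isTorusMultiplicative_graphFamily hι H hx)
    hι Finset.univ_nonempty
  obtain ⟨ρ, hρ⟩ := Subgroup.exists_eq_graph
    (G := positionSubgroup (graphFamily x) Finset.univ Finset.univ)
    ⟨fun y z h => Subtype.ext (Prod.ext h (h_poly.snd_eq h)), fun g =>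
      let ⟨y, hy, hyg⟩ := exists_mem_positionSubgroup_graphFamily x g
      ⟨⟨y, hy⟩, hyg⟩⟩
  have h_mem (g : Matrix.SpecialLinearGroup ι ℂ) :
      (g, ρ g) ∈ positionSubgroup (graphFamily x) Finset.univ Finset.univ :=
    hρ ▸ MonoidHom.mem_graph.2 rfl
  refine ⟨ρ, h_poly.entriesIn h_mem fun a b => coord_mem_coordinateAlgebra _ (a, b),
    fun i j hij t => ?_⟩
  have h : graphFamily x i j t ∈ ρ.graph :=
    hρ ▸ mem_positionSubgroup _ (Finset.mem_univ i) (Finset.mem_univ j) hij t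
  exact MonoidHom.mem_graph.1 h

end Extension

section Heisenberg

open Module Module.End

variable {κ K V : Type*} [Field K] [AddCommGroup V] [Module K V]

lemma eigenspace_mem_invtSubmodule {f g : End K V} (h : Commute f g) (μ : K) :
    f.eigenspace μ ∈ g.invtSubmodule :=
  (mem_invtSubmodule_iff_mapsTo g).2 (mapsTo_genEigenspace_of_comm h μ 1)

variable [FiniteDimensional K V]

lemma exists_inf_eigenspace_ne_bot [IsAlgClosed K] {f : End K V} (hf : Function.Injective f)
    {W : Submodule K V} (hW : W ≠ ⊥) (hfW : W ∈ f.invtSubmodule) :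
    ∃ μ ≠ 0, W ⊓ f.eigenspace μ ≠ ⊥ := by
  have : Nontrivial W := Submodule.nontrivial_iff_ne_bot.2 hW
  obtain ⟨μ, hμ⟩ := exists_eigenvalue (f.restrict hfW)
  obtain ⟨w, hw⟩ := hμ.exists_hasEigenvector
  have hw_ne : (w : V) ≠ 0 := fun h => hw.2 (Subtype.ext h)
  have h_eigen : f w = μ • (w : V) := congrArg Subtype.val hw.apply_eq_smul
  refine ⟨μ, ?_, (Submodule.ne_bot_iff _).2 ⟨w, ⟨w.2, mem_eigenspace_iff.2 h_eigen⟩, hw_ne⟩⟩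
  rintro rfl
  rw [zero_smul] at h_eigen
  exact hw_ne (hf (h_eigen.trans (map_zero f).symm))

-- `y` maps the `μ`-eigenspace of `x` into the `μ * l`-eigenspace.
lemma two_mul_finrank_inf_eigenspace_le {x y z : End K V} (hy : Function.Injective y)
    (hxy : x * y = z * (y * x)) {l μ : K} (hl : l ≠ 1) (hμ : μ ≠ 0) {W : Submodule K V}
    (hW : W ≤ z.eigenspace l) (hyW : W ∈ y.invtSubmodule) :
    2 * finrank K (W ⊓ x.eigenspace μ : Submodule K V) ≤ finrank K W := by
  set U := W ⊓ x.eigenspace μ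
  have h_map : U.map y ≤ W ⊓ x.eigenspace (μ * l) := by
    rintro _ ⟨u, ⟨huW, hu⟩, rfl⟩
    have hyu := (mem_invtSubmodule_iff_forall_mem_of_mem y).1 hyW u huW
    refine ⟨hyu, mem_eigenspace_iff.2 ?_⟩
    calc x (y u) = z (y (x u)) := LinearMap.congr_fun hxy u
      _ = (μ * l) • y u := by
        rw [mem_eigenspace_iff.1 hu, map_smul, map_smul, mem_eigenspace_iff.1 (hW hyu), smul_smul]
  have h_ne : μ ≠ μ * l := fun h => hl (mul_left_cancel₀ hμ (h.symm.trans (mul_one μ).symm))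
  have h_disjoint : Disjoint U (U.map y) :=
    (disjoint_genEigenspace x h_ne 1 1).mono inf_le_right (h_map.trans inf_le_right)
  have h_finrank : finrank K (U.map y) = finrank K U :=
    (Submodule.equivMapOfInjective y hy U).finrank_eq.symm
  calc 2 * finrank K U = finrank K U + finrank K (U.map y) := by rw [h_finrank, two_mul]
    _ = finrank K (U ⊔ U.map y : Submodule K V) := by
      rw [← Submodule.finrank_sup_add_finrank_inf_eq, h_disjoint.eq_bot, finrank_bot, add_zero]
    _ ≤ finrank K W := Submodule.finrank_mono (sup_le inf_le_left (h_map.trans inf_le_left))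

theorem two_pow_card_le_finrank [IsAlgClosed K] {x y : κ → End K V} {z : End K V}
    (hx : ∀ i, Function.Injective (x i)) (hy : ∀ i, Function.Injective (y i))
    (hxx : ∀ i j, Commute (x i) (x j)) (hxy : ∀ i j, i ≠ j → Commute (x i) (y j))
    (hxyz : ∀ i, x i * y i = z * (y i * x i)) {l : K} (hl : l ≠ 1) (s : Finset κ)
    {W : Submodule K V} (hW : W ≠ ⊥) (hWz : W ≤ z.eigenspace l)
    (hWx : ∀ i ∈ s, W ∈ (x i).invtSubmodule) (hWy : ∀ i ∈ s, W ∈ (y i).invtSubmodule) :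
    2 ^ s.card ≤ finrank K W := by
  classical
  induction s using Finset.induction_on generalizing W with
  | empty => simpa using Submodule.one_le_finrank_iff.2 hW
  | insert i s hi ih =>
    have hi_mem := Finset.mem_insert_self i s
    obtain ⟨μ, hμ, h_ne⟩ := exists_inf_eigenspace_ne_bot (hx i) hW (hWx i hi_mem)
    have h_inf := ih h_ne (inf_le_left.trans hWz)
      (fun j hj => invtSubmodule.inf_mem (hWx j (Finset.mem_insert_of_mem hj))
        (eigenspace_mem_invtSubmodule (hxx i j) μ))
      (fun j hj => invtSubmodule.inf_mem (hWy j (Finset.mem_insert_of_mem hj))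
        (eigenspace_mem_invtSubmodule (hxy i j (ne_of_mem_of_not_mem hj hi).symm) μ))
    calc 2 ^ (insert i s).card = 2 * 2 ^ s.card := by
          rw [Finset.card_insert_of_notMem hi, pow_succ']
      _ ≤ 2 * finrank K (W ⊓ (x i).eigenspace μ : Submodule K V) := Nat.mul_le_mul_left 2 h_inf
      _ ≤ finrank K W :=
        two_mul_finrank_inf_eigenspace_le (hy i) (hxyz i) hl hμ hWz (hWy i hi_mem)

end Heisenberg

section Unipotence

open Module Module.End

variable {ι R K V : Type*} [Field K] [IsAlgClosed K] [AddCommGroup V] [Module K V]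
  [FiniteDimensional K V]

lemma isNilpotent_sub_one_of_eigenvalues {f : End K V} (h : ∀ μ, f.HasEigenvalue μ → μ = 1) :
    IsNilpotent (f - 1) := by
  have h_roots := Multiset.eq_replicate_card.2 fun μ hμ =>
    h μ (f.hasEigenvalue_iff_isRoot_charpoly μ |>.2 (Polynomial.isRoot_of_mem_roots hμ))
  have h_charpoly := (IsAlgClosed.splits f.charpoly).eq_prod_roots_of_monic f.charpoly_monic
  rw [h_roots, Multiset.map_replicate, Multiset.prod_replicate] at h_charpoly
  have h_aeval := f.aeval_self_charpoly
  rw [h_charpoly] at h_aeval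
  exact ⟨_, by simpa using h_aeval⟩

variable [Fintype ι] [DecidableEq ι] [CommRing R]

theorem isNilpotent_apply_elem_sub_one
    (ρ : Matrix.SpecialLinearGroup ι R →* End K V) (hV : finrank K V < 2 ^ (Fintype.card ι - 2))
    (p q : ι) (t : R) : IsNilpotent (ρ (elem p q t) - 1) := by
  rcases eq_or_ne p q with rfl | hpq
  · simp [elem]
  refine isNilpotent_sub_one_of_eigenvalues fun l hl => of_not_not fun hl_ne => ?_
  let κ := {j : ι // j ∉ ({p, q} : Finset ι)}
  have h_left (j : κ) : p ≠ j.1 := fun h => j.2 (by simp [h])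
  have h_right (j : κ) : j.1 ≠ q := fun h => j.2 (by simp [h])
  have h_inj (g : Matrix.SpecialLinearGroup ι R) : Function.Injective (ρ g) :=
    ((Module.End.isUnit_iff _).1 ((Group.isUnit g).map ρ)).injective
  have h_card : (Finset.univ : Finset κ).card = Fintype.card ι - 2 := by
    rw [Finset.card_univ, Fintype.card_subtype_compl, Fintype.card_coe, Finset.card_pair hpq]
  refine (two_pow_card_le_finrank (x := fun j : κ => ρ (elem p j.1 t))
    (y := fun j : κ => ρ (elem j.1 q 1)) (z := ρ (elem p q t))
    (fun j => h_inj _) (fun j => h_inj _)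
    (fun i j => (elem_commute (h_left i) (h_left j) (h_left i).symm (h_left j) t t).map ρ)
    (fun i j hij =>
      (elem_commute (h_left i) (h_right j) (fun h => hij (Subtype.ext h)) hpq t 1).map ρ)
    (fun j => ?_) hl_ne Finset.univ hl le_rfl
    (fun j _ => eigenspace_mem_invtSubmodule
      ((elem_commute hpq (h_left j) hpq.symm (h_left j) t t).map ρ) l)
    (fun j _ => eigenspace_mem_invtSubmodule
      ((elem_commute hpq (h_right j) (h_right j).symm hpq t 1).map ρ) l)).not_gt
    ((Submodule.finrank_le _).trans_lt (h_card ▸ hV))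
  rw [← map_mul, ← map_mul, ← map_mul, elem_mul_elem (h_left j) (h_right j) hpq, mul_one, mul_assoc]

end Unipotence

section BinomialPower

variable {K A : Type*} [Field K] [Ring A] [Algebra K A]

/-- The power `z ^ t = ∑ k, (t choose k) (z - 1) ^ k` of a unipotent element `z`, for an exponent
`t` in a field of characteristic zero. -/
noncomputable def binomialPower (z : A) (t : K) : A :=
  ∑ k ∈ Finset.range (nilpotencyClass (z - 1)),
    ((descPochhammer K k).eval t / (k.factorial : K)) • (z - 1) ^ k

lemma commute_binomialPower {z w : A} (h : Commute z w) (s t : K) :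
    Commute (binomialPower z s) (binomialPower w t) :=
  Commute.sum_left _ _ _ fun _ _ => Commute.sum_right _ _ _ fun _ _ =>
    ((((h.sub_left (.one_left w)).sub_right (.one_right _)).pow_pow _ _).smul_left _).smul_right _

lemma binomialPower_natCast [CharZero K] {z : A} (hz : IsNilpotent (z - 1)) (n : ℕ) :
    binomialPower z (n : K) = z ^ n := by
  have h_vanish {k : ℕ} (hk : nilpotencyClass (z - 1) ≤ k) : (z - 1) ^ k = 0 :=
    pow_eq_zero_of_le hk (pow_nilpotencyClass hz)
  have h_term (k : ℕ) : ((descPochhammer K k).eval (n : K) / (k.factorial : K)) • (z - 1) ^ k =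
      n.choose k • (z - 1) ^ k := by
    rw [← Nat.cast_choose_eq_descPochhammer_div, Nat.cast_smul_eq_nsmul]
  calc binomialPower z (n : K)
      = ∑ k ∈ Finset.range (nilpotencyClass (z - 1)), n.choose k • (z - 1) ^ k :=
        Finset.sum_congr rfl fun k _ => h_term k
    _ = ∑ k ∈ Finset.range (n + 1), n.choose k • (z - 1) ^ k := by
        rcases le_total (nilpotencyClass (z - 1)) (n + 1) with h | h
        · refine Finset.sum_subset (Finset.range_mono h) fun k _ hk => ?_
          rw [h_vanish (by simpa using hk), smul_zero]
        · refine (Finset.sum_subset (Finset.range_mono h) fun k _ hk => ?_).symm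
          rw [Nat.choose_eq_zero_of_lt (by simpa using hk), zero_smul]
    _ = (z - 1 + 1) ^ n := by
        rw [(Commute.one_right (z - 1)).add_pow]
        simp only [one_pow, mul_one, nsmul_eq_mul']
    _ = z ^ n := by rw [sub_add_cancel]

variable {m Y : Type*}

lemma EntriesIn.eq_of_natCast [CharZero K] {φ ψ : K → Matrix m m K}
    (hφ : EntriesIn (polynomialMaps K) φ) (hψ : EntriesIn (polynomialMaps K) ψ)
    (h : ∀ n : ℕ, φ n = ψ n) (t : K) : φ t = ψ t := by
  ext a b
  refine sub_eq_zero.1 (eq_zero_of_mem_polynomialMaps (sub_mem (hφ a b) (hψ a b))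
    ((Set.infinite_range_of_injective Nat.cast_injective).mono ?_) t)
  rintro _ ⟨n, rfl⟩
  exact sub_eq_zero.2 (congrFun₂ (h n) a b)

lemma EntriesIn.eq_of_natCast_natCast [CharZero K] {φ ψ : K → K → Matrix m m K}
    (hφ : ∀ s, EntriesIn (polynomialMaps K) (φ s)) (hψ : ∀ s, EntriesIn (polynomialMaps K) (ψ s))
    (hφ' : ∀ t, EntriesIn (polynomialMaps K) fun s => φ s t)
    (hψ' : ∀ t, EntriesIn (polynomialMaps K) fun s => ψ s t)
    (h : ∀ a b : ℕ, φ a b = ψ a b) (s t : K) : φ s t = ψ s t :=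
  (hφ s).eq_of_natCast (hψ s) (fun b => (hφ' b).eq_of_natCast (hψ' b) (fun a => h a b) s) t

variable [Fintype m] [DecidableEq m]

lemma entriesIn_binomialPower (z : Matrix m m K) {B : Subalgebra K (Y → K)} {s : Y → K}
    (hs : s ∈ B) : EntriesIn B fun y => binomialPower z (s y) := by
  intro a b
  have h_term (k : ℕ) : (fun y => (descPochhammer K k).eval (s y) / (k.factorial : K)) ∈ B := by
    simp only [div_eq_mul_inv]
    exact mul_mem (comp_mem_of_mem_polynomialMaps (mem_polynomialMaps.2 ⟨_, fun _ => rfl⟩) hs)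
      (B.algebraMap_mem _)
  convert B.sum_mem fun k (_ : k ∈ Finset.range (nilpotencyClass (z - 1))) =>
    B.mul_mem (h_term k) (B.algebraMap_mem (((z - 1) ^ k) a b)) using 1
  ext y
  simp [binomialPower, Matrix.sum_apply]

lemma binomialPower_add [CharZero K] {z : Matrix m m K} (hz : IsNilpotent (z - 1)) (s t : K) :
    binomialPower z (s + t) = binomialPower z s * binomialPower z t := by
  refine EntriesIn.eq_of_natCast_natCast (φ := fun s t => binomialPower z (s + t))
    (ψ := fun s t => binomialPower z s * binomialPower z t)
    (fun s => entriesIn_binomialPower z (add_mem ((polynomialMaps K).algebraMap_mem s)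
      id_mem_polynomialMaps))
    (fun s => (EntriesIn.const _).mul (entriesIn_binomialPower z id_mem_polynomialMaps))
    (fun t => entriesIn_binomialPower z (add_mem id_mem_polynomialMaps
      ((polynomialMaps K).algebraMap_mem t)))
    (fun t => (entriesIn_binomialPower z id_mem_polynomialMaps).mul (EntriesIn.const _))
    (fun a b => ?_) s t
  rw [← Nat.cast_add, binomialPower_natCast hz, binomialPower_natCast hz,
    binomialPower_natCast hz, pow_add]

lemma binomialPower_mul_binomialPower [CharZero K] {u v w : Matrix m m K}
    (hu : IsNilpotent (u - 1)) (hv : IsNilpotent (v - 1)) (hw : IsNilpotent (w - 1))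
    (h : ∀ a b : ℕ, u ^ a * v ^ b = w ^ (a * b) * v ^ b * u ^ a) (s t : K) :
    binomialPower u s * binomialPower v t =
      binomialPower w (s * t) * binomialPower v t * binomialPower u s := by
  have h_poly (z : Matrix m m K) : EntriesIn (polynomialMaps K) fun t => binomialPower z t :=
    entriesIn_binomialPower z id_mem_polynomialMaps
  refine EntriesIn.eq_of_natCast_natCast (φ := fun s t => binomialPower u s * binomialPower v t)
    (ψ := fun s t => binomialPower w (s * t) * binomialPower v t * binomialPower u s)
    (fun s => (EntriesIn.const _).mul (h_poly v))
    (fun s => ((entriesIn_binomialPower w (mul_mem ((polynomialMaps K).algebraMap_mem s)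
      id_mem_polynomialMaps)).mul (h_poly v)).mul (EntriesIn.const _))
    (fun t => (h_poly u).mul (EntriesIn.const _))
    (fun t => ((entriesIn_binomialPower w (mul_mem id_mem_polynomialMaps
      ((polynomialMaps K).algebraMap_mem t))).mul (EntriesIn.const _)).mul (h_poly u))
    (fun a b => ?_) s t
  rw [← Nat.cast_mul, binomialPower_natCast hu, binomialPower_natCast hv,
    binomialPower_natCast hw, h]

end BinomialPower

section OneParameterGroups

variable {m K : Type*} [Fintype m] [DecidableEq m] [Field K] [CharZero K]

/-- The one-parameter group `t ↦ z ^ t` through a unipotent matrix `z`. -/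
noncomputable def unipotentOneParam {z : Matrix m m K} (hz : IsNilpotent (z - 1)) :
    Multiplicative K →* GL m K :=
  MonoidHom.toHomUnits
    { toFun := fun t => binomialPower z t.toAdd
      map_one' := by simpa using binomialPower_natCast (K := K) hz 0
      map_mul' := fun s t => binomialPower_add hz s.toAdd t.toAdd }

lemma apply_intCast_of_map_add {R G : Type*} [Ring R] [Group G] {f : R → G}
    (hf : ∀ s t, f (s + t) = f s * f t) (k : ℤ) : f k = f 1 ^ k := by
  let f' : Multiplicative R →* G := MonoidHom.mk' (fun t => f t.toAdd) fun s t => hf s.toAdd t.toAdd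
  have h := map_zpow f' (.ofAdd 1) k
  rwa [← ofAdd_zsmul, zsmul_one] at h

variable {ι : Type*} [Fintype ι] [DecidableEq ι]

/-- The family `t ↦ ρ (1 + E_ij) ^ t` of one-parameter groups attached to a representation `ρ` of
`SL ι ℤ` in which the elementary matrices act unipotently. -/
noncomputable def unipotentFamily {ρ : Matrix.SpecialLinearGroup ι ℤ →* GL m K}
    (hρ : ∀ i j, IsNilpotent ((ρ (elem i j 1) : Matrix m m K) - 1)) (i j : ι) (t : K) : GL m K :=
  unipotentOneParam (hρ i j) (.ofAdd t)

variable {ρ : Matrix.SpecialLinearGroup ι ℤ →* GL m K}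
  (hρ : ∀ i j, IsNilpotent ((ρ (elem i j 1) : Matrix m m K) - 1))

lemma coe_unipotentFamily (i j : ι) (t : K) :
    (unipotentFamily hρ i j t : Matrix m m K) = binomialPower (ρ (elem i j 1) : Matrix m m K) t :=
  rfl

lemma unipotentFamily_add (i j : ι) (s t : K) :
    unipotentFamily hρ i j (s + t) = unipotentFamily hρ i j s * unipotentFamily hρ i j t := by
  rw [Units.ext_iff, Units.val_mul]
  simp only [coe_unipotentFamily]
  exact binomialPower_add (hρ i j) s t

lemma unipotentFamily_one (i j : ι) : unipotentFamily hρ i j 1 = ρ (elem i j 1) := by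
  rw [Units.ext_iff, coe_unipotentFamily]
  simpa using binomialPower_natCast (K := K) (hρ i j) 1

lemma unipotentFamily_intCast {i j : ι} (hij : i ≠ j) (k : ℤ) :
    unipotentFamily hρ i j k = ρ (elem i j k) := by
  have h_elem := apply_intCast_of_map_add (elem_add (R := ℤ) hij) k
  rw [Int.cast_id] at h_elem
  rw [apply_intCast_of_map_add (unipotentFamily_add hρ i j), unipotentFamily_one, h_elem, map_zpow]

lemma isPolynomialFamily_unipotentFamily : IsPolynomialFamily (unipotentFamily hρ) :=
  fun _ _ _ => entriesIn_binomialPower _ id_mem_polynomialMaps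

lemma isSteinberg_unipotentFamily : IsSteinberg (unipotentFamily hρ) where
  add _ := unipotentFamily_add hρ _ _
  commute {i j k l} hij hkl hjk hil s t := by
    have h : Commute (ρ (elem i j 1) : Matrix m m K) (ρ (elem k l 1)) :=
      ((elem_commute hij hkl hjk hil 1 1).map ρ).map (Units.coeHom _)
    exact Units.ext (commute_binomialPower h s t)
  mul {i j k} hij hjk hik s t := by
    refine Units.ext
      (binomialPower_mul_binomialPower (hρ i j) (hρ j k) (hρ i k) (fun a b => ?_) s t)
    have h_pow {p q : ι} (hpq : p ≠ q) (c : ℕ) :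
        (ρ (elem p q 1) : Matrix m m K) ^ c = (ρ (elem p q c) : GL m K) := by
      rw [← Units.val_pow_eq_pow_val, ← map_pow, ← zpow_natCast,
        ← apply_intCast_of_map_add (elem_add (R := ℤ) hpq)]
      rfl
    rw [h_pow hij, h_pow hjk, h_pow hik, Nat.cast_mul]
    simp only [← Units.val_mul, ← map_mul, elem_mul_elem hij hjk hik]

end OneParameterGroups

lemma isNilpotent_coe_apply_elem_sub_one {ι m R K : Type*} [Fintype ι] [DecidableEq ι] [Fintype m]
    [DecidableEq m] [CommRing R] [Field K] [IsAlgClosed K]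
    (ρ : Matrix.SpecialLinearGroup ι R →* GL m K)
    (hm : Fintype.card m < 2 ^ (Fintype.card ι - 2)) (i j : ι) (t : R) :
    IsNilpotent ((ρ (elem i j t) : Matrix m m K) - 1) := by
  let e : Matrix m m K ≃ₐ[K] Module.End K (m → K) := Matrix.toLinAlgEquiv'
  let ρ' : Matrix.SpecialLinearGroup ι R →* Module.End K (m → K) :=
    (e : Matrix m m K →* Module.End K (m → K)).comp ((Units.coeHom _).comp ρ)
  have h := isNilpotent_apply_elem_sub_one ρ' (by rwa [Module.finrank_fintype_fun_eq_card]) i j t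
  rw [← IsNilpotent.map_iff e.injective, map_sub, map_one]
  exact h

theorem exists_isAlgebraicSL_comp_map {n N : ℕ} (hn : 2 < n) (hN : N < 2 ^ (n - 2))
    (ρ : Matrix.SpecialLinearGroup (Fin n) ℤ →* GL (Fin N) ℂ) :
    ∃ ρ' : Matrix.SpecialLinearGroup (Fin n) ℂ →* GL (Fin N) ℂ,
      IsAlgebraicSL ρ' ∧ ρ = ρ'.comp (Matrix.SpecialLinearGroup.map (Int.castRingHom ℂ)) := by
  have h_unipotent (i j : Fin n) : IsNilpotent ((ρ (elem i j 1) : Matrix (Fin N) (Fin N) ℂ) - 1) :=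
    isNilpotent_coe_apply_elem_sub_one ρ (by simpa using hN) i j 1
  obtain ⟨ρ', h_poly, h_elem⟩ := exists_monoidHom_of_isSteinberg (by simpa using hn)
    (isSteinberg_unipotentFamily h_unipotent) (isPolynomialFamily_unipotentFamily h_unipotent)
  refine ⟨ρ', fun a b => mem_coordinateAlgebra.1 (h_poly a b), monoidHom_ext_elem ?_⟩
  intro i j hij t
  rw [MonoidHom.comp_apply, elem_map, h_elem i j hij, eq_intCast, unipotentFamily_intCast _ hij]

lemma eventually_pow_lt_two_pow (k : ℕ) : ∀ᶠ n : ℕ in Filter.atTop, (n + 3) ^ k < 2 ^ (n + 1) := by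
  have h_lim := tendsto_pow_const_div_const_pow_of_one_lt k (r := (2 : ℝ)) one_lt_two
  have h_shift := h_lim.comp (Filter.tendsto_add_atTop_nat 3)
  filter_upwards [h_shift.eventually_lt_const (show (0 : ℝ) < 1 / 4 by norm_num)] with n hn
  rw [Function.comp_apply, div_lt_iff₀ (by positivity)] at hn
  rify
  calc ((n : ℝ) + 3) ^ k < 1 / 4 * 2 ^ (n + 3) := by exact_mod_cast hn
    _ = 2 ^ (n + 1) := by ring

end SLnRep

theorem eventually_algebraic_of_polynomial_growth_general (N : ℕ → ℕ)
    (ρ : ∀ n : ℕ, Matrix.SpecialLinearGroup (Fin (n + 3)) ℤ →* GL (Fin (N n)) ℂ)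
    (hN : ∀ᶠ n in Filter.atTop, N n < 2 ^ (n + 1)) :
    ∃ M : ℕ, ∀ n : ℕ, M ≤ n →
      ∃ ρ' : Matrix.SpecialLinearGroup (Fin (n + 3)) ℂ →* GL (Fin (N n)) ℂ,
        IsAlgebraicSL ρ' ∧
        ρ n = ρ'.comp (Matrix.SpecialLinearGroup.map (Int.castRingHom ℂ)) := by
  obtain ⟨M, hM⟩ := Filter.eventually_atTop.1 hN
  exact ⟨M, fun n hn => SLnRep.exists_isAlgebraicSL_comp_map (by lia) (hM n hn) (ρ n)⟩

/-- A sequence `V_3, V_4, V_5, …` of finite-dimensional complex representations of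
`SL_n(ℤ)` of polynomial dimension growth (`dim V_n ≤ n^k`) is eventually algebraic:
for all sufficiently large `n`, the representation `V_n` extends to an algebraic
representation of `SL_n(ℂ)`. -/
theorem eventually_algebraic_of_polynomial_growth (N : ℕ → ℕ)
    (ρ : ∀ n : ℕ, Matrix.SpecialLinearGroup (Fin (n + 3)) ℤ →* GL (Fin (N n)) ℂ)
    (k : ℕ) (hk : ∀ n : ℕ, N n ≤ (n + 3) ^ k) :
    ∃ M : ℕ, ∀ n : ℕ, M ≤ n →
      ∃ ρ' : Matrix.SpecialLinearGroup (Fin (n + 3)) ℂ →* GL (Fin (N n)) ℂ,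
        IsAlgebraicSL ρ' ∧
        ρ n = ρ'.comp (Matrix.SpecialLinearGroup.map (Int.castRingHom ℂ)) :=
  eventually_algebraic_of_polynomial_growth_general N ρ <|
    (SLnRep.eventually_pow_lt_two_pow k).mono fun n hn => (hk n).trans_lt hn
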